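/- arXiv:1210.1152 — 3 statements merged into one kernel-verified Lean document; each statement's English description precedes it below -/
import Mathlib

section
/- Let n ≥ 1 and let r̄ = (r₁, …, r_n) be a weight vector with r_i > 0 for all i and ∑_{i=1}^n r_i = 1. Define the set of r̄-badly approximable vectors Bad^{r̄} = { x ∈ ℝⁿ : ∃ c > 0 such that for every q ∈ ℕ (q ≥ 1) and every p ∈ ℤⁿ there exists i with |q x_i − p_i| ≥ (c/q)^{r_i} }. Then for every nonempty open set U ⊆ ℝⁿ, the Hausdorff dimension of Bad^{r̄} ∩ U equals n. -/
open Set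

/-!
Let `n` be the dimension. Fix a large `R` and a small `s`, and consider boxes whose `i`-th side at
generation `k` is `s * R ^ (-k * (1 + r i))`. For `∑ i, r i = 1` such a box has volume
`s ^ n * R ^ (-k * (n + 1))`, so by the simplex lemma all rational points near it with denominator
at most `R ^ k` lie on one hyperplane. Cut the box into the grid cells of generation `k + 1` and
discard those near this hyperplane: on each grid line in the coordinate direction most transverse
to it only a proportion `O(n / R)` of the cells is discarded, so at least half of the cells remain.
A point that stays in remaining cells for all `k` is badly approximable.

Losing a factor of `2` per generation, during which all sides shrink by a factor of at least `R`,
costs only `O(n / log R)` in dimension: distributing mass equally among the remaining cells gives a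
measure whose value on balls of radius `d` is `O(d ^ t)`, with `t` as close to `n` as desired once
`R` is large.
-/

theorem card_Icc_floor_le {u v : ℝ} (h : u ≤ v) :
    ((Finset.Icc ⌊u⌋ ⌊v⌋).card : ℝ) ≤ v - u + 2 := by
  have h_floor : ⌊u⌋ ≤ ⌊v⌋ + 1 := (Int.floor_le_floor h).trans (Int.le_add_one le_rfl)
  have h_card : ((Finset.Icc ⌊u⌋ ⌊v⌋).card : ℝ) = ⌊v⌋ + 1 - ⌊u⌋ := by
    exact_mod_cast Int.card_Icc_of_le _ _ h_floor
  linarith [Int.floor_le v, Int.lt_floor_add_one u]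

section MassDistribution

open MeasureTheory Metric Topology
open scoped ENNReal NNReal

theorem le_dimH_of_measure_closedBall_le {X : Type*} [MetricSpace X] [MeasurableSpace X]
    [BorelSpace X] {μ : Measure X} {t : ℝ≥0} {C : ℝ≥0∞} {δ : ℝ} (hC : C ≠ ∞) (hδ : 0 < δ)
    (hμ : ∀ x r, 0 < r → r ≤ δ → μ (closedBall x r) ≤ C * ENNReal.ofReal r ^ (t : ℝ))
    {S : Set X} (hS : μ S ≠ 0) : (t : ℝ≥0∞) ≤ dimH S := by
  have hle : C⁻¹ • μ ≤ Measure.hausdorffMeasure (t : ℝ) := by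
    refine Measure.le_hausdorffMeasure _ _ (ENNReal.ofReal (δ / 2)) (by simpa using hδ)
      fun A hA ↦ ?_
    rcases A.eq_empty_or_nonempty with rfl | ⟨x, hx⟩
    · simp
    have hA_fin : ediam A ≠ ∞ := ne_top_of_le_ne_top ENNReal.ofReal_ne_top hA
    have hAδ : diam A < δ :=
      (ENNReal.toReal_le_of_le_ofReal (by positivity) hA).trans_lt (half_lt_self hδ)
    have h_near : ∀ᶠ r in 𝓝[>] diam A, μ A ≤ C * ENNReal.ofReal r ^ (t : ℝ) := by
      filter_upwards [Ioo_mem_nhdsGT hAδ] with r hr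
      have hA_ball : A ⊆ closedBall x r := fun y hy ↦
        (dist_le_diam_of_mem (isBounded_iff_ediam_ne_top.2 hA_fin) hy hx).trans hr.1.le
      exact (measure_mono hA_ball).trans (hμ x r (diam_nonneg.trans_lt hr.1) hr.2.le)
    have h_cont : Continuous fun r : ℝ ↦ C * ENNReal.ofReal r ^ (t : ℝ) :=
      (ENNReal.continuous_const_mul hC).comp
        (ENNReal.continuous_rpow_const.comp ENNReal.continuous_ofReal)
    have h_diam := ge_of_tendsto h_cont.continuousWithinAt.tendsto h_near
    rw [diam, ENNReal.ofReal_toReal hA_fin] at h_diam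
    rw [Measure.smul_apply, smul_eq_mul, mul_comm, ← div_eq_mul_inv]
    exact ENNReal.div_le_of_le_mul' h_diam
  refine le_dimH_of_hausdorffMeasure_ne_zero fun h_zero ↦ ?_
  have hS_zero : C⁻¹ * μ S = 0 := nonpos_iff_eq_zero.1 ((hle S).trans_eq h_zero)
  exact (mul_ne_zero (ENNReal.inv_ne_zero.2 hC) hS) hS_zero

end MassDistribution

section UniformWordMeasure

open MeasureTheory PiNat
open scoped ENNReal

/-- The Bernoulli measure on infinite words over a finite alphabet whose letters are independent
and uniformly distributed. -/
noncomputable abbrev uniformWordMeasure (α : Type*) [Fintype α] [Nonempty α] [MeasurableSpace α] :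
    Measure (ℕ → α) :=
  Measure.infinitePi fun _ ↦ (PMF.uniformOfFintype α).toMeasure

theorem uniformWordMeasure_cylinder {α : Type*} [Fintype α] [Nonempty α] [MeasurableSpace α]
    [MeasurableSingletonClass α] (ω : ℕ → α) (k : ℕ) :
    uniformWordMeasure α (cylinder ω k) = (Fintype.card α : ℝ≥0∞)⁻¹ ^ k := by
  rw [cylinder_eq_pi, Measure.infinitePi_pi _ fun _ _ ↦ measurableSet_singleton _]
  simp_rw [PMF.toMeasure_apply_singleton _ _ (measurableSet_singleton _),
    PMF.uniformOfFintype_apply, Finset.prod_const, Finset.card_range]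

end UniformWordMeasure

/-- A nested family of coordinate boxes in `ι → ℝ` indexed by the finite words over `α`. A box of
generation `k` is encoded by its lower corner, all boxes of that generation having side lengths
`side k`, and `child k a d` is the lower corner of the `d`-th child of the box with corner `a`.
Children lie in their parent and do not overlap. -/
structure CellScheme (ι α : Type*) where
  root : ι → ℝ
  side : ℕ → ι → ℝ
  child : ℕ → (ι → ℝ) → α → ι → ℝ
  side_pos : ∀ k i, 0 < side k i
  le_child : ∀ k a d, a ≤ child k a d
  child_add_side_le : ∀ k a d, child k a d + side (k + 1) ≤ a + side k
  exists_side_le_abs_child_sub : ∀ k a d d', d ≠ d' →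
    ∃ i, side (k + 1) i ≤ |child k a d i - child k a d' i|

namespace CellScheme

open MeasureTheory Metric PiNat
open scoped ENNReal NNReal

variable {ι α : Type*} (S : CellScheme ι α)

/-- The lower corner of the box of generation `k` reached by following the word `ω`. -/
def corner (ω : ℕ → α) : ℕ → ι → ℝ
  | 0 => S.root
  | k + 1 => S.child k (corner ω k) (ω k)

/-- The point with address `ω` in the limit set of a cell scheme: the common point of the nested
boxes along `ω`, which is the supremum of their lower corners. -/
noncomputable def limit (ω : ℕ → α) (i : ι) : ℝ :=
  ⨆ k, S.corner ω k i

theorem limit_mem_Icc (ω : ℕ → α) (k : ℕ) :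
    S.limit ω ∈ Icc (S.corner ω k) (S.corner ω k + S.side k) := by
  have h_mem (i : ι) : S.limit ω i ∈ ⋂ k, Icc (S.corner ω k i) (S.corner ω k i + S.side k i) :=
    Monotone.ciSup_mem_iInter_Icc_of_antitone
      (monotone_nat_of_le_succ fun k ↦ S.le_child k _ _ i)
      (antitone_nat_of_succ_le fun k ↦ S.child_add_side_le k _ _ i)
      fun k ↦ le_add_of_nonneg_right (S.side_pos k i).le
  exact ⟨fun i ↦ (mem_iInter.1 (h_mem i) k).1, fun i ↦ (mem_iInter.1 (h_mem i) k).2⟩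

theorem limit_mem_closedBall [Fintype ι] [Nonempty ι] {ε : ℝ} (hε : ∀ i, S.side 0 i ≤ ε)
    (ω : ℕ → α) : S.limit ω ∈ closedBall S.root ε := by
  refine dist_pi_le_iff'.2 fun i ↦ ?_
  have h_lower : S.root i ≤ S.limit ω i := (S.limit_mem_Icc ω 0).1 i
  have h_upper : S.limit ω i ≤ S.root i + S.side 0 i := (S.limit_mem_Icc ω 0).2 i
  exact abs_le.2 ⟨by linarith [S.side_pos 0 i, hε i], by linarith [hε i]⟩

theorem corner_congr {ω ω' : ℕ → α} {k : ℕ} (h : ω' ∈ cylinder ω k) :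
    S.corner ω' k = S.corner ω k := by
  induction k with
  | zero => rfl
  | succ k ih => rw [corner, corner, ih fun l hl ↦ h l (by omega), h k k.lt_succ_self]

theorem exists_side_le_abs_corner_sub {ω ω' : ℕ → α} {k : ℕ} (h : ω' ∉ cylinder ω k) :
    ∃ i, S.side k i ≤ |S.corner ω' k i - S.corner ω k i| := by
  induction k with
  | zero => simp at h
  | succ k ih =>
    by_cases h_prefix : ω' ∈ cylinder ω k
    · have h_letter : ω' k ≠ ω k := fun h_eq ↦ h fun l hl ↦
        (Nat.lt_succ_iff_lt_or_eq.1 hl).elim (h_prefix l) fun h_l ↦ h_l ▸ h_eq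
      simp only [corner, S.corner_congr h_prefix]
      exact S.exists_side_le_abs_child_sub k _ _ _ h_letter
    · obtain ⟨i, hi⟩ := ih h_prefix
      have h_lower := S.le_child k (S.corner ω k) (ω k) i
      have h_lower' := S.le_child k (S.corner ω' k) (ω' k) i
      have h_upper := S.child_add_side_le k (S.corner ω k) (ω k) i
      have h_upper' := S.child_add_side_le k (S.corner ω' k) (ω' k) i
      simp only [Pi.add_apply] at h_upper h_upper'
      refine ⟨i, ?_⟩
      simp only [corner]
      rcases le_abs.1 hi with hi | hi
      · exact le_abs.2 (.inl (by linarith))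
      · exact le_abs.2 (.inr (by linarith))

theorem measurable_comp_corner [Countable α] [MeasurableSpace α] [MeasurableSingletonClass α]
    {β : Type*} [MeasurableSpace β] (g : (ι → ℝ) → β) (k : ℕ) :
    Measurable fun ω ↦ g (S.corner ω k) := by
  induction k generalizing g with
  | zero => exact measurable_const (a := g S.root)
  | succ k ih =>
    have h_joint : Measurable fun p : α × (ℕ → α) ↦ g (S.child k (S.corner p.2 k) p.1) :=
      measurable_from_prod_countable_right fun d ↦ ih fun a ↦ g (S.child k a d)
    exact h_joint.comp (.prodMk (measurable_pi_apply (X := fun _ ↦ α) k) measurable_id)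

theorem measurable_limit [Countable α] [MeasurableSpace α] [MeasurableSingletonClass α] :
    Measurable S.limit :=
  measurable_pi_iff.2 fun i ↦ .iSup fun k ↦ S.measurable_comp_corner (fun a ↦ a i) k

section Measure

variable [Fintype α] [Nonempty α] [MeasurableSpace α] [MeasurableSingletonClass α]

theorem uniformWordMeasure_floor_corner_eq_le (k : ℕ) (v : ι → ℤ) :
    uniformWordMeasure α {ω | ∀ i, ⌊S.corner ω k i / S.side k i⌋ = v i} ≤
      (Fintype.card α : ℝ≥0∞)⁻¹ ^ k := by
  rcases eq_empty_or_nonempty {ω | ∀ i, ⌊S.corner ω k i / S.side k i⌋ = v i} with h | ⟨ω, hω⟩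
  · simp [h]
  rw [← uniformWordMeasure_cylinder ω k]
  refine measure_mono fun ω' hω' ↦ not_imp_comm.1 S.exists_side_le_abs_corner_sub ?_
  rintro ⟨i, hi⟩
  have h_close := Int.abs_sub_lt_one_of_floor_eq_floor ((hω' i).trans (hω i).symm)
  rw [← sub_div, abs_div, abs_of_pos (S.side_pos k i), div_lt_one (S.side_pos k i)] at h_close
  exact h_close.not_ge hi

theorem uniformWordMeasure_limit_preimage_closedBall_le [Fintype ι] {k : ℕ} {d : ℝ}
    (hd : ∀ i, S.side k i ≤ d) (y : ι → ℝ) :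
    uniformWordMeasure α (S.limit ⁻¹' closedBall y d) ≤
      ENNReal.ofReal ((∏ i, 5 * d / S.side k i) / Fintype.card α ^ k) := by
  classical
  let V : Finset (ι → ℤ) := Fintype.piFinset fun i ↦
    Finset.Icc ⌊(y i - d - S.side k i) / S.side k i⌋ ⌊(y i + d) / S.side k i⌋
  have h_cover : S.limit ⁻¹' closedBall y d ⊆
      ⋃ v ∈ V, {ω | ∀ i, ⌊S.corner ω k i / S.side k i⌋ = v i} := by
    intro ω hω
    refine mem_iUnion₂.2 ⟨fun i ↦ ⌊S.corner ω k i / S.side k i⌋, ?_, fun _ ↦ rfl⟩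
    refine Fintype.mem_piFinset.2 fun i ↦ Finset.mem_Icc.2 ?_
    have h_dist := abs_le.1 ((dist_le_pi_dist (S.limit ω) y i).trans hω)
    have h_lower := (S.limit_mem_Icc ω k).1 i
    have h_upper := (S.limit_mem_Icc ω k).2 i
    rw [Pi.add_apply] at h_upper
    have h_side := (S.side_pos k i).le
    constructor <;> gcongr <;> linarith
  have h_card : (V.card : ℝ) ≤ ∏ i, 5 * d / S.side k i := by
    rw [Fintype.card_piFinset, Nat.cast_prod]
    refine Finset.prod_le_prod (fun _ _ ↦ Nat.cast_nonneg _) fun i _ ↦ ?_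
    have h_side := S.side_pos k i
    refine (card_Icc_floor_le ?_).trans ?_
    · gcongr
      linarith [hd i]
    · rw [← sub_div, ← le_sub_iff_add_le, div_le_iff₀ h_side, sub_mul, div_mul_cancel₀ _ h_side.ne']
      linarith [hd i]
  calc uniformWordMeasure α (S.limit ⁻¹' closedBall y d)
      ≤ ∑ v ∈ V, uniformWordMeasure α {ω | ∀ i, ⌊S.corner ω k i / S.side k i⌋ = v i} :=
        (measure_mono h_cover).trans (measure_biUnion_finset_le _ _)
    _ ≤ V.card * (Fintype.card α : ℝ≥0∞)⁻¹ ^ k := by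
        rw [← nsmul_eq_mul]
        exact Finset.sum_le_card_nsmul _ _ _ fun v _ ↦ S.uniformWordMeasure_floor_corner_eq_le k v
    _ = ENNReal.ofReal (V.card / Fintype.card α ^ k) := by
        rw [ENNReal.ofReal_div_of_pos (by positivity), ENNReal.ofReal_pow (by positivity),
          ENNReal.ofReal_natCast, ENNReal.ofReal_natCast, ← ENNReal.inv_pow, div_eq_mul_inv]
    _ ≤ _ := ENNReal.ofReal_le_ofReal (by gcongr)

theorem exists_uniformWordMeasure_limit_preimage_closedBall_le_rpow [Fintype ι] {R s c t : ℝ}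
    (hR : 1 < R) (hs : 0 < s) (hc : 0 < c) (ht : t ≤ Fintype.card ι)
    (h_side : ∀ k i, S.side k i ≤ s / R ^ k)
    (h_vol : ∀ k, c * (R ^ k) ^ (t - Fintype.card ι) ≤ Fintype.card α ^ k * ∏ i, S.side k i) :
    ∃ C : ℝ, ∀ y d, 0 < d → d ≤ s →
      uniformWordMeasure α (S.limit ⁻¹' closedBall y d) ≤ ENNReal.ofReal (C * d ^ t) := by
  set N := Fintype.card ι
  have : 0 < R := by linarith
  refine ⟨5 ^ N / (c * (R * s) ^ (t - N)), fun y d hd hds ↦ ?_⟩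
  obtain ⟨k, hk_le, hk_lt⟩ : ∃ k : ℕ, R ^ k ≤ R * (s / d) ∧ s / d < R ^ k := by
    obtain ⟨k, hk_le, hk_lt⟩ := exists_nat_pow_near ((one_le_div hd).2 hds) hR
    exact ⟨k + 1, by rw [pow_succ']; gcongr, hk_lt⟩
  have h_side_le (i : ι) : S.side k i ≤ d :=
    (h_side k i).trans ((div_lt_comm₀ hd (by positivity)).1 hk_lt).le
  refine (S.uniformWordMeasure_limit_preimage_closedBall_le h_side_le y).trans
    (ENNReal.ofReal_le_ofReal ?_)
  calc (∏ i, 5 * d / S.side k i) / (Fintype.card α : ℝ) ^ k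
      = 5 ^ N * d ^ N / (Fintype.card α ^ k * ∏ i, S.side k i) := by
        rw [Finset.prod_div_distrib, Finset.prod_const, Finset.card_univ, mul_pow, div_div,
          mul_comm (∏ i, _)]
    _ ≤ 5 ^ N * d ^ N / (c * (R ^ k) ^ (t - N)) := by
        gcongr 5 ^ N * d ^ N / ?_
        exact h_vol k
    _ ≤ 5 ^ N * d ^ N / (c * (R * (s / d)) ^ (t - N)) := by
        gcongr 5 ^ N * d ^ N / (c * ?_)
        exact Real.rpow_le_rpow_of_nonpos (by positivity) hk_le (by linarith)
    _ = 5 ^ N / (c * (R * s) ^ (t - N)) * d ^ t := by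
        rw [← mul_div_assoc, Real.div_rpow (by positivity) hd.le, Real.rpow_sub_natCast hd.ne' t N]
        field_simp

end Measure

theorem le_dimH_range_limit [Fintype α] [Nonempty α] [Fintype ι] {R s c : ℝ} {t : ℝ≥0}
    (hR : 1 < R) (hs : 0 < s) (hc : 0 < c) (ht : (t : ℝ) ≤ Fintype.card ι)
    (h_side : ∀ k i, S.side k i ≤ s / R ^ k)
    (h_vol : ∀ k, c * (R ^ k) ^ ((t : ℝ) - Fintype.card ι) ≤
      Fintype.card α ^ k * ∏ i, S.side k i) :
    (t : ℝ≥0∞) ≤ dimH (range S.limit) := by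
  let _ : MeasurableSpace α := ⊤
  have : DiscreteMeasurableSpace α := ⟨fun _ ↦ trivial⟩
  obtain ⟨C, hC⟩ := S.exists_uniformWordMeasure_limit_preimage_closedBall_le_rpow hR hs hc ht
    h_side h_vol
  refine le_dimH_of_measure_closedBall_le (μ := (uniformWordMeasure α).map S.limit)
    (C := ENNReal.ofReal C) ENNReal.ofReal_ne_top hs (fun y d hd hds ↦ ?_) fun h_zero ↦ ?_
  · rw [Measure.map_apply S.measurable_limit isClosed_closedBall.measurableSet,
      ENNReal.ofReal_rpow_of_pos hd, ← ENNReal.ofReal_mul' (by positivity)]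
    exact hC y d hd hds
  · have h_le := Measure.le_map_apply (μ := uniformWordMeasure α) S.measurable_limit.aemeasurable
      (range S.limit)
    rw [h_zero, preimage_range, measure_univ] at h_le
    exact one_ne_zero (nonpos_iff_eq_zero.1 h_le)

theorem le_dimH_range_limit_of_side_eq [Fintype α] [Nonempty α] [Fintype ι] {R s : ℝ} {t : ℝ≥0}
    {ρ : ι → ℝ} (hR : 1 < R) (hs : 0 < s) (ht : (t : ℝ) ≤ Fintype.card ι) (hρ : ∀ i, 0 ≤ ρ i)
    (hρR : ∀ i, ρ i ≤ 1 / R) (h_side : S.side = fun k i ↦ s * ρ i ^ k)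
    (h_vol : R ^ ((t : ℝ) - Fintype.card ι) ≤ Fintype.card α * ∏ i, ρ i) :
    (t : ℝ≥0∞) ≤ dimH (range S.limit) := by
  have hR₀ : 0 ≤ R := by linarith
  refine S.le_dimH_range_limit hR hs (pow_pos hs (Fintype.card ι)) ht (fun k i ↦ ?_) fun k ↦ ?_
  · rw [h_side, div_eq_mul_one_div s, ← one_div_pow]
    exact mul_le_mul_of_nonneg_left (pow_le_pow_left₀ (hρ i) (hρR i) k) hs.le
  · calc s ^ Fintype.card ι * (R ^ k) ^ ((t : ℝ) - Fintype.card ι)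
        = s ^ Fintype.card ι * (R ^ ((t : ℝ) - Fintype.card ι)) ^ k := by
          rw [Real.rpow_pow_comm hR₀]
      _ ≤ s ^ Fintype.card ι * (Fintype.card α * ∏ i, ρ i) ^ k := by gcongr
      _ = Fintype.card α ^ k * ∏ i, S.side k i := by
          rw [h_side, Finset.prod_mul_distrib, Finset.prod_const, Finset.card_univ,
            Finset.prod_pow]
          ring

end CellScheme

section SimplexLemma

open Matrix
open scoped Nat

theorem abs_det_le_factorial_mul_prod {κ R : Type*} [Fintype κ] [DecidableEq κ] [CommRing R]
    [LinearOrder R] [IsStrictOrderedRing R] {P : Matrix κ κ R} {c : κ → R}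
    (h : ∀ l i, |P l i| ≤ c i) : |P.det| ≤ (Fintype.card κ)! * ∏ i, c i := by
  have h_term (σ : Equiv.Perm κ) : |(Equiv.Perm.sign σ : R) * ∏ i, P (σ i) i| ≤ ∏ i, c i := by
    rw [abs_mul, Finset.abs_prod, abs_unit_intCast, one_mul]
    exact Finset.prod_le_prod (fun _ _ ↦ abs_nonneg _) fun i _ ↦ h (σ i) i
  calc |P.det| ≤ ∑ σ : Equiv.Perm κ, |(Equiv.Perm.sign σ : R) * ∏ i, P (σ i) i| := by
        rw [det_apply']
        exact Finset.abs_sum_le_sum_abs _ _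
    _ ≤ ∑ _σ : Equiv.Perm κ, ∏ i, c i := Finset.sum_le_sum fun σ _ ↦ h_term σ
    _ = (Fintype.card κ)! * ∏ i, c i := by
        rw [Finset.sum_const, Finset.card_univ, Fintype.card_perm, nsmul_eq_mul]

theorem exists_ne_zero_dotProduct_eq_zero_of_forall_det_eq_zero {κ K : Type*} [Fintype κ]
    [DecidableEq κ] [Field K] {V : Set (κ → K)}
    (h : ∀ f : κ → κ → K, (∀ l, f l ∈ V) → det (of f) = 0) :
    ∃ u : κ → K, u ≠ 0 ∧ ∀ v ∈ V, u ⬝ᵥ v = 0 := by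
  have h_span : Submodule.span K V < ⊤ := by
    refine lt_top_iff_ne_top.2 fun h_top ↦ ?_
    obtain ⟨f, hf_mem, -, hf_indep⟩ := Submodule.exists_fun_fin_finrank_span_eq K V
    have h_finrank : Fintype.card κ = Module.finrank K (Submodule.span K V) := by
      rw [h_top, finrank_top, Module.finrank_fintype_fun_eq_card]
    let e : κ ≃ Fin (Module.finrank K (Submodule.span K V)) := Fintype.equivFinOfCardEq h_finrank
    have h_unit : IsUnit (of (f ∘ e)) :=
      linearIndependent_rows_iff_isUnit.1 (hf_indep.comp e e.injective)
    exact ((isUnit_iff_isUnit_det _).1 h_unit).ne_zero (h _ fun l ↦ hf_mem _)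
  obtain ⟨u, hu, hu_ker⟩ := Submodule.exists_le_ker_of_lt_top _ h_span
  refine ⟨(dotProductEquiv K κ).symm u, by simpa using hu, fun v hv ↦ ?_⟩
  rw [← dotProductEquiv_apply_apply, LinearEquiv.apply_symm_apply]
  exact hu_ker (Submodule.subset_span hv)

variable {ι : Type*} [Fintype ι]

/- Subtracting `a i` times the column `none` from the column `i` leaves a matrix with the same
determinant, now less than `1` in absolute value. -/
theorem det_eq_zero_of_abs_sub_mul_le [DecidableEq ι] {P : Matrix (Option ι) (Option ι) ℤ}
    {a c : ι → ℝ} {Q : ℝ} (h_none : ∀ l, |(P l none : ℝ)| ≤ Q)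
    (h_some : ∀ l i, |(P l (some i) : ℝ) - a i * P l none| ≤ c i)
    (h_vol : (Fintype.card ι + 1)! * (Q * ∏ i, c i) < 1) : P.det = 0 := by
  let B : Matrix (Option ι) (Option ι) ℝ :=
    of fun l o ↦ o.elim (P l none : ℝ) fun i ↦ P l (some i) - a i * P l none
  have h_det : (P.det : ℝ) = B.det := by
    rw [Int.cast_det, ← det_transpose, ← det_transpose B]
    refine det_eq_of_forall_row_eq_smul_add_const (fun o ↦ o.elim 0 a) none rfl fun o l ↦ ?_
    cases o <;> simp [B]
  have h_entry (l o : Option ι) : |B l o| ≤ o.elim Q c := by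
    cases o with
    | none => exact h_none l
    | some i => exact h_some l i
  have h_lt : |(P.det : ℝ)| < 1 := by
    rw [h_det]
    refine (abs_det_le_factorial_mul_prod h_entry).trans_lt ?_
    rwa [Fintype.prod_option, Fintype.card_option]
  exact Int.abs_lt_one_iff.1 (by exact_mod_cast h_lt)

theorem det_eq_zero_of_abs_div_sub_le [DecidableEq ι] {q : Option ι → ℕ}
    {p : Option ι → ι → ℤ} {a w : ι → ℝ} {Q : ℝ} (hq : ∀ l, 1 ≤ q l) (hqQ : ∀ l, (q l : ℝ) ≤ Q)
    (hp : ∀ l i, |(p l i : ℝ) / q l - a i| ≤ w i)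
    (h_vol : (Fintype.card ι + 1)! * (Q ^ (Fintype.card ι + 1) * ∏ i, w i) < 1) :
    (of fun l (o : Option ι) ↦ o.elim (q l : ℝ) fun i ↦ (p l i : ℝ)).det = 0 := by
  let P : Matrix (Option ι) (Option ι) ℤ := of fun l o ↦ o.elim (q l : ℤ) (p l)
  have hP : (of fun l (o : Option ι) ↦ o.elim (q l : ℝ) fun i ↦ (p l i : ℝ)) =
      P.map (Int.cast : ℤ → ℝ) := by
    ext l o
    cases o <;> simp [P]
  have h_none (l : Option ι) : |(P l none : ℝ)| ≤ Q := by simpa [P] using hqQ l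
  have h_some (l : Option ι) (i : ι) : |(P l (some i) : ℝ) - a i * P l none| ≤ Q * w i := by
    have hq_pos : (0 : ℝ) < q l := by exact_mod_cast hq l
    have h_factor : (p l i : ℝ) - a i * q l = q l * ((p l i : ℝ) / q l - a i) := by field_simp
    simp only [P, of_apply, Option.elim, Int.cast_natCast, h_factor, abs_mul, Nat.abs_cast]
    exact mul_le_mul (hqQ l) (hp l i) (abs_nonneg _) (hq_pos.le.trans (hqQ l))
  rw [hP, ← Int.cast_det, det_eq_zero_of_abs_sub_mul_le h_none h_some, Int.cast_zero]
  rwa [Finset.prod_mul_distrib, Finset.prod_const, Finset.card_univ, ← mul_assoc Q, ← pow_succ']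

/- The simplex lemma, going back to Davenport. -/
theorem exists_hyperplane_of_abs_div_sub_le [Nonempty ι] {Q : ℝ} {a w : ι → ℝ}
    (h_vol : (Fintype.card ι + 1)! * (Q ^ (Fintype.card ι + 1) * ∏ i, w i) < 1) :
    ∃ A : ι → ℝ, A ≠ 0 ∧ ∃ b : ℝ, ∀ (q : ℕ) (p : ι → ℤ), 1 ≤ q → (q : ℝ) ≤ Q →
      (∀ i, |(p i : ℝ) / q - a i| ≤ w i) → A ⬝ᵥ (fun i ↦ (p i : ℝ) / q) = b := by
  classical
  by_cases h_ex : ∃ (q : ℕ) (p : ι → ℤ), 1 ≤ q ∧ (q : ℝ) ≤ Q ∧ ∀ i, |(p i : ℝ) / q - a i| ≤ w i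
  swap
  · exact ⟨1, one_ne_zero, 0, fun q p hq hqQ hp ↦ (h_ex ⟨q, p, hq, hqQ, hp⟩).elim⟩
  let V : Set (Option ι → ℝ) := {v | ∃ (q : ℕ) (p : ι → ℤ), 1 ≤ q ∧ (q : ℝ) ≤ Q ∧
    (∀ i, |(p i : ℝ) / q - a i| ≤ w i) ∧ v = fun o ↦ o.elim (q : ℝ) fun i ↦ p i}
  have h_det (f : Option ι → Option ι → ℝ) (hf : ∀ l, f l ∈ V) : det (of f) = 0 := by
    choose q p hq hqQ hp hf using hf
    rw [funext hf]
    exact det_eq_zero_of_abs_div_sub_le hq hqQ hp h_vol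
  obtain ⟨u, hu, huV⟩ := exists_ne_zero_dotProduct_eq_zero_of_forall_det_eq_zero h_det
  have h_zero (q : ℕ) (p : ι → ℤ) (hq : 1 ≤ q) (hqQ : (q : ℝ) ≤ Q)
      (hp : ∀ i, |(p i : ℝ) / q - a i| ≤ w i) :
      u none * q + ∑ i, u (some i) * p i = 0 := by
    simpa [dotProduct, Fintype.sum_option] using huV _ ⟨q, p, hq, hqQ, hp, rfl⟩
  refine ⟨fun i ↦ u (some i), fun hA ↦ hu ?_, -u none, fun q p hq hqQ hp ↦ ?_⟩
  · obtain ⟨q, p, hq, hqQ, hp⟩ := h_ex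
    have h_some (i : ι) : u (some i) = 0 := congrFun hA i
    have h_none : u none = 0 := by
      simpa [h_some, Nat.one_le_iff_ne_zero.1 hq] using h_zero q p hq hqQ hp
    ext o
    cases o <;> simp [h_some, h_none]
  · have hq_ne : (q : ℝ) ≠ 0 := by exact_mod_cast Nat.one_le_iff_ne_zero.1 hq
    simp only [dotProduct, mul_div_assoc', ← Finset.sum_div]
    rw [div_eq_iff hq_ne]
    linarith [h_zero q p hq hqQ hp]

end SimplexLemma

section Hyperplane

open Matrix

variable {ι : Type*} [Fintype ι]

theorem abs_sub_le_of_near_hyperplane {A u u' z z' δ : ι → ℝ} {i₀ : ι} (hA : A i₀ ≠ 0)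
    (h_max : ∀ i, |A i| * δ i ≤ |A i₀| * δ i₀) (hz : A ⬝ᵥ z = A ⬝ᵥ z')
    (h : ∀ i, |u i - z i| ≤ δ i) (h' : ∀ i, |u' i - z' i| ≤ δ i)
    (h_agree : ∀ i, i ≠ i₀ → u i = u' i) :
    |u i₀ - u' i₀| ≤ 2 * Fintype.card ι * δ i₀ := by
  have h_dot (x y : ι → ℝ) (hxy : ∀ i, |x i - y i| ≤ δ i) :
      |A ⬝ᵥ (x - y)| ≤ Fintype.card ι * (|A i₀| * δ i₀) :=
    calc |A ⬝ᵥ (x - y)| ≤ ∑ i, |A i * (x i - y i)| := Finset.abs_sum_le_sum_abs _ _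
      _ ≤ ∑ _i : ι, |A i₀| * δ i₀ := Finset.sum_le_sum fun i _ ↦ by
          rw [abs_mul]
          exact (mul_le_mul_of_nonneg_left (hxy i) (abs_nonneg _)).trans (h_max i)
      _ = Fintype.card ι * (|A i₀| * δ i₀) := by
          rw [Finset.sum_const, Finset.card_univ, nsmul_eq_mul]
  have h_coord : A i₀ * (u i₀ - u' i₀) = A ⬝ᵥ (u - z) - A ⬝ᵥ (u' - z') := by
    have h_single : A ⬝ᵥ (u - u') = A i₀ * (u i₀ - u' i₀) :=
      Finset.sum_eq_single_of_mem i₀ (Finset.mem_univ _) fun i _ hi ↦ by simp [h_agree i hi]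
    rw [← h_single]
    simp only [dotProduct_sub, hz]
    ring
  refine le_of_mul_le_mul_left ?_ (abs_pos.2 hA)
  calc |A i₀| * |u i₀ - u' i₀| ≤ |A ⬝ᵥ (u - z)| + |A ⬝ᵥ (u' - z')| := by
        rw [← abs_mul, h_coord]
        exact abs_sub _ _
    _ ≤ |A i₀| * (2 * Fintype.card ι * δ i₀) := by
        linarith [h_dot u z h, h_dot u' z' h']

theorem card_le_prod_update [DecidableEq ι] {M : ι → ℕ} {B : Finset (ι → ℕ)} {i₀ : ι} {D : ℕ}
    (hB : ∀ j ∈ B, ∀ i, j i < M i)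
    (h_fiber : ∀ j ∈ B, ∀ j' ∈ B, (∀ i, i ≠ i₀ → j i = j' i) → |(j i₀ : ℤ) - j' i₀| < D) :
    B.card ≤ ∏ i, Function.update M i₀ D i := by
  rw [show ∏ i, Function.update M i₀ D i =
    (Fintype.piFinset fun i ↦ Finset.range (Function.update M i₀ D i)).card by simp]
  refine Finset.card_le_card_of_injOn (fun j ↦ Function.update j i₀ (j i₀ % D)) ?_ ?_
  · intro j hj
    have hD : 0 < D := by simpa using h_fiber j hj j hj fun _ _ ↦ rfl
    simp only [Finset.mem_coe, Fintype.mem_piFinset, Finset.mem_range]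
    intro i
    rcases eq_or_ne i i₀ with rfl | hi
    · simpa using Nat.mod_lt _ hD
    · simpa [hi] using hB j hj i
  · intro j hj j' hj' h_eq
    have h_agree (i : ι) (hi : i ≠ i₀) : j i = j' i := by simpa [hi] using congrFun h_eq i
    have h_mod : j i₀ % D = j' i₀ % D := by simpa using congrFun h_eq i₀
    ext i
    rcases eq_or_ne i i₀ with rfl | hi
    · exact Nat.ModEq.eq_of_abs_lt h_mod (by rw [abs_sub_comm]; exact h_fiber j hj j' hj' h_agree)
    · exact h_agree i hi

theorem two_mul_card_near_hyperplane_le {A a δ τ : ι → ℝ} {b : ℝ} {M : ι → ℕ}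
    {B : Finset (ι → ℕ)} (hA : A ≠ 0) (hδ : ∀ i, 0 < δ i) (hτ : ∀ i, 0 < τ i)
    (hM : ∀ i, 4 * Fintype.card ι * δ i + 2 * τ i ≤ M i * τ i) (hB : ∀ j ∈ B, ∀ i, j i < M i)
    (h_near : ∀ j ∈ B, ∃ z, A ⬝ᵥ z = b ∧ ∀ i, |a i + j i * τ i - z i| ≤ δ i) :
    2 * B.card ≤ ∏ i, M i := by
  classical
  obtain ⟨i₁, hi₁⟩ := Function.ne_iff.1 hA
  obtain ⟨i₀, -, h_max⟩ := Finset.exists_max_image Finset.univ (fun i ↦ |A i| * δ i)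
    ⟨i₁, Finset.mem_univ _⟩
  have hA₀ : A i₀ ≠ 0 := fun h_zero ↦ by
    have h_le := h_max i₁ (Finset.mem_univ _)
    rw [h_zero, abs_zero, zero_mul] at h_le
    exact (mul_pos (abs_pos.2 hi₁) (hδ i₁)).not_ge h_le
  set D := ⌊2 * Fintype.card ι * δ i₀ / τ i₀⌋₊ + 1
  have hD : 2 * D ≤ M i₀ := by
    have h_floor : (⌊2 * Fintype.card ι * δ i₀ / τ i₀⌋₊ : ℝ) ≤ 2 * Fintype.card ι * δ i₀ / τ i₀ :=
      Nat.floor_le (div_nonneg (mul_nonneg (by positivity) (hδ i₀).le) (hτ i₀).le)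
    rw [le_div_iff₀ (hτ i₀)] at h_floor
    have h_mul : ((2 * D : ℕ) : ℝ) * τ i₀ ≤ M i₀ * τ i₀ := by
      push_cast [D]
      linarith [hM i₀]
    exact_mod_cast le_of_mul_le_mul_right h_mul (hτ i₀)
  have h_fiber (j) (hj : j ∈ B) (j') (hj' : j' ∈ B) (h_agree : ∀ i, i ≠ i₀ → j i = j' i) :
      |(j i₀ : ℤ) - j' i₀| < D := by
    obtain ⟨z, hz, h_close⟩ := h_near j hj
    obtain ⟨z', hz', h_close'⟩ := h_near j' hj'
    have h_le := abs_sub_le_of_near_hyperplane hA₀ (fun i ↦ h_max i (Finset.mem_univ _))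
      (hz.trans hz'.symm) h_close h_close' fun i hi ↦ by rw [h_agree i hi]
    rw [add_sub_add_left_eq_sub, ← sub_mul, abs_mul, abs_of_pos (hτ i₀), ← le_div_iff₀ (hτ i₀)]
      at h_le
    have h_lt := h_le.trans_lt (Nat.lt_floor_add_one _)
    simp only [D]
    exact_mod_cast h_lt
  calc 2 * B.card ≤ 2 * ∏ i, Function.update M i₀ D i :=
        Nat.mul_le_mul_left 2 (card_le_prod_update hB h_fiber)
    _ = 2 * D * ∏ i ∈ Finset.univ \ {i₀}, M i := by
        rw [Finset.prod_update_of_mem (Finset.mem_univ i₀), mul_assoc]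
    _ ≤ M i₀ * ∏ i ∈ Finset.univ \ {i₀}, M i := Nat.mul_le_mul_right _ hD
    _ = ∏ i, M i := by
        rw [← Finset.prod_update_of_mem (Finset.mem_univ i₀), Function.update_eq_self]

end Hyperplane

section FarFromRationals

open Matrix
open scoped Nat

variable {ι : Type*}

/-- The point `x` is not in the box with half side lengths `δ` around any rational point whose
denominator is at most `Q`. -/
def IsFarFromRationals (Q : ℝ) (δ x : ι → ℝ) : Prop :=
  ∀ (q : ℕ) (p : ι → ℤ), 1 ≤ q → (q : ℝ) ≤ Q → ∃ i, δ i ≤ |x i - p i / q|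

theorem IsFarFromRationals.of_abs_sub_le {Q : ℝ} {δ η x y : ι → ℝ}
    (hy : IsFarFromRationals Q (δ + η) y) (hxy : ∀ i, |x i - y i| ≤ η i) :
    IsFarFromRationals Q δ x := by
  intro q p hq hqQ
  obtain ⟨i, hi⟩ := hy q p hq hqQ
  have h_triangle := abs_sub_le (y i) (x i) (p i / q)
  rw [abs_sub_comm (y i) (x i)] at h_triangle
  exact ⟨i, by linarith [hxy i, Pi.add_apply δ η i]⟩

/-- The lower corner of the cell with index `j` in the grid with origin `a` and cell side
lengths `τ`. -/
def gridCorner (a τ : ι → ℝ) (j : ι → ℕ) : ι → ℝ :=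
  fun i ↦ a i + j i * τ i

theorem exists_finset_isFarFromRationals_of_mem_Icc_gridCorner [Fintype ι] [Nonempty ι] {Q : ℝ}
    {σ τ δ : ι → ℝ} {M : ι → ℕ} (hτ : ∀ i, 0 < τ i) (hτδ : ∀ i, τ i ≤ δ i)
    (hMσ : ∀ i, M i * τ i ≤ σ i) (hM : ∀ i, 8 * Fintype.card ι * δ i + 2 * τ i ≤ M i * τ i)
    (h_vol : (Fintype.card ι + 1)! * (Q ^ (Fintype.card ι + 1) * ∏ i, 2 * σ i) < 1)
    (a : ι → ℝ) :
    ∃ G : Finset (ι → ℕ), ∏ i, M i ≤ 2 * G.card ∧ ∀ j ∈ G, (∀ i, j i < M i) ∧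
      ∀ x ∈ Icc (gridCorner a τ j) (gridCorner a τ j + τ), IsFarFromRationals Q δ x := by
  classical
  obtain ⟨A, hA, b, hAb⟩ := exists_hyperplane_of_abs_div_sub_le (a := a) h_vol
  let F : Finset (ι → ℕ) := Fintype.piFinset fun i ↦ Finset.range (M i)
  have hF {j : ι → ℕ} (hj : j ∈ F) (i : ι) : j i < M i :=
    Finset.mem_range.1 (Fintype.mem_piFinset.1 hj i)
  let far (j : ι → ℕ) : Prop := IsFarFromRationals Q (δ + δ) (gridCorner a τ j)
  have h_near (j) (hj : j ∈ F.filter (¬ far ·)) :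
      ∃ z, A ⬝ᵥ z = b ∧ ∀ i, |gridCorner a τ j i - z i| ≤ (δ + δ) i := by
    obtain ⟨hjF, hj⟩ := Finset.mem_filter.1 hj
    simp only [far, IsFarFromRationals, not_forall, not_exists, not_le] at hj
    obtain ⟨q, p, hq, hqQ, hp⟩ := hj
    refine ⟨fun i ↦ (p i : ℝ) / q, hAb q p hq hqQ fun i ↦ ?_, fun i ↦ (hp i).le⟩
    have h_corner : (j i : ℝ) * τ i ≤ M i * τ i :=
      mul_le_mul_of_nonneg_right (by exact_mod_cast (hF hjF i).le) (hτ i).le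
    have hδ : 0 < δ i := (hτ i).trans_le (hτδ i)
    have h_card : δ i ≤ Fintype.card ι * δ i :=
      le_mul_of_one_le_left hδ.le (by exact_mod_cast Fintype.card_pos (α := ι))
    have h_dist := abs_lt.1 (hp i)
    simp only [gridCorner, Pi.add_apply] at h_dist
    have h_nonneg : 0 ≤ (j i : ℝ) * τ i := mul_nonneg (Nat.cast_nonneg _) (hτ i).le
    exact abs_le.2 ⟨by linarith [hM i, hMσ i, hτ i], by linarith [hM i, hMσ i, hτ i]⟩
  have h_few : 2 * (F.filter (¬ far ·)).card ≤ ∏ i, M i :=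
    two_mul_card_near_hyperplane_le hA (fun i ↦ add_pos ((hτ i).trans_le (hτδ i))
      ((hτ i).trans_le (hτδ i))) hτ (fun i ↦ by linarith [hM i, Pi.add_apply δ δ i])
      (fun j hj ↦ hF (Finset.mem_filter.1 hj).1) h_near
  refine ⟨F.filter far, ?_, fun j hj ↦ ?_⟩
  · have h_card : F.card = ∏ i, M i := by simp [F]
    have h_split := Finset.card_filter_add_card_filter_not (s := F) far
    omega
  · obtain ⟨hjF, h_far⟩ := Finset.mem_filter.1 hj
    refine ⟨hF hjF, fun x hx ↦ h_far.of_abs_sub_le fun i ↦ abs_le.2 ?_⟩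
    have h_upper := hx.2 i
    rw [Pi.add_apply] at h_upper
    exact ⟨by linarith [hx.1 i, hτ i, hτδ i], by linarith [hτδ i]⟩

/-- The cell scheme in which all children of a box are cells of the grid with side lengths
`side (k + 1)` based at its lower corner, the `d`-th child having index `index k a d`. -/
def CellScheme.ofGrid {α : Type*} (root : ι → ℝ) (side : ℕ → ι → ℝ)
    (index : ℕ → (ι → ℝ) → α → ι → ℕ) (side_pos : ∀ k i, 0 < side k i)
    (index_injective : ∀ k a, Function.Injective (index k a))
    (index_add_one_mul_le : ∀ k a d i, (index k a d i + 1) * side (k + 1) i ≤ side k i) :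
    CellScheme ι α where
  root := root
  side := side
  child k a d := gridCorner a (side (k + 1)) (index k a d)
  side_pos := side_pos
  le_child k a d i :=
    le_add_of_nonneg_right (mul_nonneg (Nat.cast_nonneg _) (side_pos (k + 1) i).le)
  child_add_side_le k a d i := by
    simp only [gridCorner, Pi.add_apply]
    linarith [index_add_one_mul_le k a d i]
  exists_side_le_abs_child_sub k a d d' hd := by
    obtain ⟨i, hi⟩ := Function.ne_iff.1 ((index_injective k a).ne hd)
    have h_int : (1 : ℤ) ≤ |(index k a d i : ℤ) - index k a d' i| :=
      Int.one_le_abs (sub_ne_zero.2 (by exact_mod_cast hi))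
    refine ⟨i, ?_⟩
    simp only [gridCorner]
    rw [add_sub_add_left_eq_sub, ← sub_mul, abs_mul, abs_of_pos (side_pos (k + 1) i)]
    exact le_mul_of_one_le_left (side_pos (k + 1) i).le (by exact_mod_cast h_int)

theorem CellScheme.exists_forall_isFarFromRationals_limit [Fintype ι] [Nonempty ι] {α : Type*}
    [Fintype α] {Q : ℕ → ℝ} {side δ : ℕ → ι → ℝ} {M : ℕ → ι → ℕ} (h_pos : ∀ k i, 0 < side k i)
    (hδ : ∀ k i, side (k + 1) i ≤ δ k i) (h_side : ∀ k i, M k i * side (k + 1) i ≤ side k i)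
    (hM : ∀ k i, 8 * Fintype.card ι * δ k i + 2 * side (k + 1) i ≤ M k i * side (k + 1) i)
    (h_vol : ∀ k, (Fintype.card ι + 1)! * (Q k ^ (Fintype.card ι + 1) * ∏ i, 2 * side k i) < 1)
    (h_card : ∀ k, 2 * Fintype.card α ≤ ∏ i, M k i + 1) (root : ι → ℝ) :
    ∃ S : CellScheme ι α, S.root = root ∧ S.side = side ∧
      ∀ ω k, IsFarFromRationals (Q k) (δ k) (S.limit ω) := by
  have h_index (k : ℕ) (a : ι → ℝ) : ∃ index : α → ι → ℕ, Function.Injective index ∧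
      ∀ d, (∀ i, index d i < M k i) ∧
        ∀ x ∈ Icc (gridCorner a (side (k + 1)) (index d))
          (gridCorner a (side (k + 1)) (index d) + side (k + 1)),
          IsFarFromRationals (Q k) (δ k) x := by
    obtain ⟨G, hG_card, hG⟩ := exists_finset_isFarFromRationals_of_mem_Icc_gridCorner
      (h_pos (k + 1)) (hδ k) (h_side k) (hM k) (h_vol k) a
    obtain ⟨f⟩ := Function.Embedding.nonempty_of_card_le (α := α) (β := G) (by
      rw [Fintype.card_coe]
      linarith [h_card k])
    exact ⟨fun d ↦ f d, Subtype.val_injective.comp f.injective, fun d ↦ hG _ (f d).2⟩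
  choose index index_injective h_index using h_index
  let S : CellScheme ι α := ofGrid root side index h_pos index_injective fun k a d i ↦
    (mul_le_mul_of_nonneg_right (by exact_mod_cast (h_index k a d).1 i)
      (h_pos (k + 1) i).le).trans (h_side k i)
  exact ⟨S, rfl, rfl, fun ω k ↦
    (h_index k (S.corner ω k) (ω k)).2 _ (S.limit_mem_Icc ω (k + 1))⟩

end FarFromRationals

section BadlyApproximable

open Filter Topology Metric
open scoped Nat NNReal ENNReal

variable {ι : Type*}

/-- The vector `x` is badly approximable for the weight vector `r`. -/
def IsBadlyApproximable (r x : ι → ℝ) : Prop :=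
  ∃ c : ℝ, 0 < c ∧ ∀ q : ℕ, 1 ≤ q → ∀ p : ι → ℤ,
    ∃ i, (c / (q : ℝ)) ^ r i ≤ |(q : ℝ) * x i - (p i : ℝ)|

theorem exists_pos_forall_rpow_le [Finite ι] {r b : ι → ℝ} (hr : ∀ i, 0 < r i)
    (hb : ∀ i, 0 < b i) : ∃ c : ℝ, 0 < c ∧ ∀ i, c ^ r i ≤ b i := by
  have h_small : ∀ᶠ c : ℝ in 𝓝[>] 0, ∀ i, c ^ r i ≤ b i := eventually_all.2 fun i ↦ by
    have h_lim := (Real.continuous_rpow_const (hr i).le).tendsto 0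
    rw [Real.zero_rpow (hr i).ne'] at h_lim
    exact (h_lim.mono_left nhdsWithin_le_nhds).eventually_le_const (hb i)
  obtain ⟨c, hc, hc_pos⟩ := (h_small.and self_mem_nhdsWithin).exists
  exact ⟨c, hc_pos, hc⟩

theorem isBadlyApproximable_of_isFarFromRationals [Finite ι] {R s : ℝ} {r x : ι → ℝ}
    (hR : 1 < R) (hs : 0 < s) (hr : ∀ i, 0 < r i)
    (hx : ∀ k : ℕ, IsFarFromRationals (R ^ k) (fun i ↦ s * (R ^ k) ^ (-(1 + r i))) x) :
    IsBadlyApproximable r x := by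
  have hR₀ : 0 < R := by linarith
  obtain ⟨c, hc, hcr⟩ := exists_pos_forall_rpow_le hr
    fun i ↦ mul_pos hs (Real.rpow_pos_of_pos hR₀ (-(1 + r i)))
  refine ⟨c, hc, fun q hq p ↦ ?_⟩
  have hq_pos : (0 : ℝ) < q := by exact_mod_cast hq
  obtain ⟨k, hqk, hkq⟩ : ∃ k : ℕ, (q : ℝ) ≤ R ^ k ∧ R ^ k ≤ R * q := by
    obtain ⟨k, hk_le, hk_lt⟩ := exists_nat_pow_near (x := (q : ℝ)) (by exact_mod_cast hq) hR
    exact ⟨k + 1, hk_lt.le, by rw [pow_succ']; gcongr⟩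
  obtain ⟨i, hi⟩ := hx k q p hq hqk
  refine ⟨i, ?_⟩
  calc (c / q) ^ r i = c ^ r i * (q : ℝ) ^ (-r i) := by
        rw [Real.div_rpow hc.le hq_pos.le, Real.rpow_neg hq_pos.le, div_eq_mul_inv]
    _ ≤ s * R ^ (-(1 + r i)) * (q : ℝ) ^ (-r i) := by
        gcongr
        exact hcr i
    _ = q * (s * (R * q) ^ (-(1 + r i))) := by
        rw [Real.mul_rpow hR₀.le hq_pos.le, neg_add, Real.rpow_add hq_pos, Real.rpow_neg_one]
        field_simp
    _ ≤ q * (s * (R ^ k) ^ (-(1 + r i))) := by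
        gcongr q * (s * ?_)
        exact Real.rpow_le_rpow_of_nonpos (by positivity) hkq (by linarith [hr i])
    _ ≤ q * |x i - p i / q| := by gcongr
    _ = |q * x i - p i| := by
        rw [← abs_of_pos hq_pos, ← abs_mul, abs_of_pos hq_pos, mul_sub,
          mul_div_cancel₀ _ hq_pos.ne']

theorem one_sub_le_floor_one_div_mul {ρ : ℝ} (hρ : 0 < ρ) : 1 - ρ ≤ ⌊1 / ρ⌋₊ * ρ := by
  have h_floor := (div_lt_iff₀ hρ).1 (Nat.lt_floor_add_one (1 / ρ))
  linarith

variable [Fintype ι]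

theorem exists_nat_half_pow_le_mul_prod {ρ : ι → ℝ} (hρ : ∀ i, 0 < ρ i)
    (hρ' : ∀ i, ρ i ≤ 1 / 2) :
    ∃ m : ℕ, 2 * m ≤ ∏ i, ⌊1 / ρ i⌋₊ + 1 ∧ (1 / 2) ^ (Fintype.card ι + 1) ≤ m * ∏ i, ρ i := by
  refine ⟨(∏ i, ⌊1 / ρ i⌋₊ + 1) / 2, by omega, ?_⟩
  have h_half : (∏ i, ⌊1 / ρ i⌋₊ : ℝ) ≤ 2 * ((∏ i, ⌊1 / ρ i⌋₊ + 1) / 2 : ℕ) := by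
    exact_mod_cast (by omega)
  have h_prod : (1 / 2) ^ Fintype.card ι ≤ (∏ i, ⌊1 / ρ i⌋₊ : ℝ) * ∏ i, ρ i := by
    rw [← Finset.prod_mul_distrib, ← Finset.card_univ, ← Finset.prod_const]
    exact Finset.prod_le_prod (fun _ _ ↦ by norm_num) fun i _ ↦ by
      linarith [one_sub_le_floor_one_div_mul (hρ i), hρ' i]
  have h_pos : 0 ≤ ∏ i, ρ i := Finset.prod_nonneg fun i _ ↦ (hρ i).le
  rw [pow_succ]
  linarith [mul_le_mul_of_nonneg_right h_half h_pos]

theorem CellScheme.exists_isFarFromRationals_limit_of_side_eq [Nonempty ι] {α : Type*} [Fintype α]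
    {R s : ℝ} {ρ : ι → ℝ} (hR : 8 * Fintype.card ι + 3 ≤ R) (hs : 0 < s) (hρ : ∀ i, 0 < ρ i)
    (hρR : ∀ i, ρ i ≤ 1 / R) (hρ_prod : R ^ (Fintype.card ι + 1) * ∏ i, ρ i ≤ 1)
    (hs_vol : (Fintype.card ι + 1)! * (2 * s) ^ Fintype.card ι < 1)
    (h_card : 2 * Fintype.card α ≤ ∏ i, ⌊1 / ρ i⌋₊ + 1) (root : ι → ℝ) :
    ∃ S : CellScheme ι α, S.root = root ∧ (S.side = fun k i ↦ s * ρ i ^ k) ∧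
      ∀ ω k, IsFarFromRationals (R ^ k) (fun i ↦ s * ρ i ^ k / R) (S.limit ω) := by
  have hR₀ : 0 < R := lt_of_lt_of_le (by positivity) hR
  have h_pos (k : ℕ) (i : ι) : 0 < s * ρ i ^ k := mul_pos hs (pow_pos (hρ i) k)
  have h_succ (k : ℕ) (i : ι) : s * ρ i ^ (k + 1) = ρ i * (s * ρ i ^ k) := by ring
  refine exists_forall_isFarFromRationals_limit (M := fun _ i ↦ ⌊1 / ρ i⌋₊) h_pos
    (fun k i ↦ ?_) (fun k i ↦ ?_) (fun k i ↦ ?_) (fun k ↦ ?_) (fun _ ↦ h_card) root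
  · rw [h_succ, div_eq_mul_one_div, mul_comm (s * _)]
    exact mul_le_mul_of_nonneg_right (hρR i) (h_pos k i).le
  · rw [h_succ, ← mul_assoc]
    refine mul_le_of_le_one_left (h_pos k i).le ?_
    exact (le_div_iff₀ (hρ i)).1 (Nat.floor_le (one_div_pos.2 (hρ i)).le)
  · have h_ratio : 8 * Fintype.card ι * (1 / R) + 2 * ρ i ≤ ⌊1 / ρ i⌋₊ * ρ i := by
      have h_one : (8 * Fintype.card ι + 3) * (1 / R) ≤ 1 := by
        rwa [mul_one_div, div_le_one hR₀]
      linarith [one_sub_le_floor_one_div_mul (hρ i), hρR i]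
    have h_mul := mul_le_mul_of_nonneg_right h_ratio (h_pos k i).le
    rw [h_succ, div_eq_mul_one_div]
    linarith
  · have h_eq : (R ^ k) ^ (Fintype.card ι + 1) * ∏ i, 2 * (s * ρ i ^ k) =
        (2 * s) ^ Fintype.card ι * (R ^ (Fintype.card ι + 1) * ∏ i, ρ i) ^ k := by
      simp only [← mul_assoc 2 s, Finset.prod_mul_distrib, Finset.prod_const, Finset.card_univ,
        Finset.prod_pow]
      ring
    rw [h_eq, ← mul_assoc]
    have h_prod : 0 ≤ R ^ (Fintype.card ι + 1) * ∏ i, ρ i :=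
      mul_nonneg (by positivity) (Finset.prod_nonneg fun i _ ↦ (hρ i).le)
    exact (mul_le_of_le_one_right (by positivity) (pow_le_one₀ h_prod hρ_prod)).trans_lt hs_vol

theorem exists_le_and_rpow_neg_le {ε η : ℝ} (hε : 0 < ε) (hη : 0 < η) (R₀ : ℝ) :
    ∃ R, R₀ ≤ R ∧ R ^ (-ε) ≤ η :=
  ((eventually_ge_atTop R₀).and
    ((tendsto_rpow_neg_atTop hε).eventually_le_const hη)).exists

theorem exists_pos_le_and_mul_two_mul_pow_lt_one {n : ℕ} (hn : n ≠ 0) {ε : ℝ} (hε : 0 < ε)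
    (C : ℝ) : ∃ s, 0 < s ∧ s ≤ ε ∧ C * (2 * s) ^ n < 1 := by
  have h_cont : Continuous fun s : ℝ ↦ C * (2 * s) ^ n := by fun_prop
  have h_lim : Tendsto (fun s : ℝ ↦ C * (2 * s) ^ n) (𝓝[>] 0) (𝓝 0) := by
    simpa [hn] using (h_cont.tendsto 0).mono_left nhdsWithin_le_nhds
  obtain ⟨s, hs_lt, hs⟩ := ((h_lim.eventually_lt_const one_pos).and (Ioc_mem_nhdsGT hε)).exists
  exact ⟨s, hs.1, hs.2, hs_lt⟩

theorem pow_mul_prod_rpow_neg_one_add_le_one {R : ℝ} {r : ι → ℝ} (hR : 1 ≤ R)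
    (hsum : 1 ≤ ∑ i, r i) : R ^ (Fintype.card ι + 1) * ∏ i, R ^ (-(1 + r i)) ≤ 1 := by
  have hR₀ : 0 < R := by linarith
  rw [← Real.rpow_sum_of_pos hR₀, ← Real.rpow_natCast, ← Real.rpow_add hR₀]
  refine Real.rpow_le_one_of_one_le_of_nonpos hR ?_
  simp only [Finset.sum_neg_distrib, Finset.sum_add_distrib, Finset.sum_const, Finset.card_univ,
    nsmul_eq_mul, Nat.cast_add, Nat.cast_one]
  linarith

theorem le_dimH_isBadlyApproximable_inter_closedBall {r : ι → ℝ} (hr : ∀ i, 0 < r i)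
    (hsum : 1 ≤ ∑ i, r i) {t : ℝ≥0} (ht : (t : ℝ) < Fintype.card ι) (x : ι → ℝ) {ε : ℝ}
    (hε : 0 < ε) : (t : ℝ≥0∞) ≤ dimH ({x | IsBadlyApproximable r x} ∩ closedBall x ε) := by
  have : Nonempty ι := Fintype.card_pos_iff.1 (by exact_mod_cast t.2.trans_lt ht)
  obtain ⟨R, hR, hRt⟩ := exists_le_and_rpow_neg_le (sub_pos.2 ht)
    (by positivity : (0 : ℝ) < (1 / 2) ^ (Fintype.card ι + 1)) (8 * Fintype.card ι + 3)
  obtain ⟨s, hs, hsε, hs_vol⟩ := exists_pos_le_and_mul_two_mul_pow_lt_one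
    (Fintype.card_ne_zero (α := ι)) hε (Fintype.card ι + 1)!
  have : 3 ≤ R := le_trans (by simp) hR
  have hR₀ : 0 < R := by linarith
  have hR₁ : 1 < R := by linarith
  let ρ (i : ι) : ℝ := R ^ (-(1 + r i))
  have hρ (i : ι) : 0 < ρ i := Real.rpow_pos_of_pos hR₀ _
  have hρR (i : ι) : ρ i ≤ 1 / R := by
    rw [one_div, ← Real.rpow_neg_one]
    exact Real.rpow_le_rpow_of_exponent_le hR₁.le (by linarith [hr i])
  have hρ_prod : R ^ (Fintype.card ι + 1) * ∏ i, ρ i ≤ 1 :=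
    pow_mul_prod_rpow_neg_one_add_le_one hR₁.le hsum
  obtain ⟨m, hm, hm_vol⟩ := exists_nat_half_pow_le_mul_prod hρ fun i ↦
    (hρR i).trans (one_div_le_one_div_of_le two_pos (by linarith))
  have : NeZero m := ⟨fun h_zero ↦ by
    rw [h_zero, Nat.cast_zero, zero_mul] at hm_vol
    exact hm_vol.not_gt (by positivity)⟩
  obtain ⟨S, h_root, h_side, h_far⟩ := CellScheme.exists_isFarFromRationals_limit_of_side_eq
    (α := Fin m) hR hs hρ hρR hρ_prod hs_vol (by rwa [Fintype.card_fin]) x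
  refine (S.le_dimH_range_limit_of_side_eq hR₁ hs ht.le (fun i ↦ (hρ i).le) hρR h_side ?_).trans
    (dimH_mono ?_)
  · rw [Fintype.card_fin, ← neg_sub]
    exact hRt.trans hm_vol
  rintro _ ⟨ω, rfl⟩
  constructor
  · refine isBadlyApproximable_of_isFarFromRationals hR₁ (div_pos hs hR₀) hr fun k ↦ ?_
    convert h_far ω k using 2 with i
    rw [← Real.rpow_pow_comm hR₀.le, div_mul_eq_mul_div]
  · rw [← h_root]
    exact S.limit_mem_closedBall (fun i ↦ by simpa [h_side] using hsε) ω

theorem stmt12_general {r : ι → ℝ} (hr : ∀ i, 0 < r i) (hsum : 1 ≤ ∑ i, r i) {U : Set (ι → ℝ)}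
    (hU : IsOpen U) (hUne : U.Nonempty) :
    dimH ({x | IsBadlyApproximable r x} ∩ U) = Fintype.card ι := by
  refine le_antisymm ((dimH_mono (subset_univ _)).trans_eq (Real.dimH_univ_pi ι)) ?_
  refine ENNReal.le_of_forall_nnreal_lt fun t ht ↦ ?_
  obtain ⟨x, hx⟩ := hUne
  obtain ⟨ε, hε, h_ball⟩ := nhds_basis_closedBall.mem_iff.1 (hU.mem_nhds hx)
  exact (le_dimH_isBadlyApproximable_inter_closedBall hr hsum (by exact_mod_cast ht) x hε).trans
    (dimH_mono (inter_subset_inter_right _ h_ball))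

end BadlyApproximable

/-- The set of `r̄`-badly approximable vectors in `ℝⁿ` is thick:
its intersection with every nonempty open set has full Hausdorff dimension `n`. -/
theorem stmt12 (n : ℕ) (hn : 1 ≤ n) (r : Fin n → ℝ)
    (hr : ∀ i, 0 < r i) (hsum : ∑ i, r i = 1)
    (U : Set (Fin n → ℝ)) (hU : IsOpen U) (hUne : U.Nonempty) :
    dimH ({x : Fin n → ℝ | ∃ c : ℝ, 0 < c ∧
        ∀ q : ℕ, 1 ≤ q → ∀ p : Fin n → ℤ,
          ∃ i, (c / (q : ℝ)) ^ (r i) ≤ |(q : ℝ) * x i - (p i : ℝ)|} ∩ U) = (n : ENNReal) := by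
  simpa [IsBadlyApproximable] using stmt12_general hr hsum.ge hU hUne
end

section
/- Let p be a prime and let r₁, r₂ ≥ 0 with r₁ + r₂ = 1. Define Bad^{r̄}_{ℤ_p²} = { x = (x₁, x₂) ∈ ℤ_p² : ∃ c > 0 such that for all z₁, z₂ ∈ ℤ and all q ∈ ℕ (q ≥ 1) there exists i ∈ {1, 2} with |x_i − z_i/q|_p ≥ (c / max(|z₁|, |z₂|, q))^{1 + r_i} }. Then Bad^{r̄}_{ℤ_p²} is thick: for every nonempty open set U ⊆ ℤ_p², the Hausdorff dimension of Bad^{r̄}_{ℤ_p²} ∩ U equals 2. -/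
open Set

/-!
Write `d` for the dimension. In a box with side lengths `p ^ (-k i)`, the rational points of height
at most `T` with denominator prime to `p` lie on a single hyperplane as soon as
`(d + 1)! * T ^ (d + 1) < p ^ ∑ k i`: the determinant formed by the integer coordinates of `d + 1`
of them is divisible by `p ^ ∑ k i`, but too small to be nonzero. Hence the points of the box that
are too close to such a rational point lie in a thin neighborhood of a hyperplane. Its translates
by suitable multiples of one basis vector are disjoint, so it takes up at most `p ^ (-τ)` of the
box, where `p ^ τ` is the factor by which the next, smaller boxes shrink. A point that avoids these
neighborhoods along a nested sequence of boxes with side lengths about `p ^ (-(1 + r i) * a)`,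
where `p ^ a` follows the height, is badly approximable.

For `s < d` the points avoiding all neighborhoods cannot be covered by balls of radii `p ^ (-m)`
whose total cost `∑ p ^ (-s * m)` is small. Charge each ball, in a box at stage `n`, the measure of
their intersection times `Θ ^ (m - n)`, with `Θ = p ^ (d - s) > 1`. If the total charge is smaller
than the measure of the box, this remains true for some box of the next stage that avoids the
neighborhoods, since passing to the next stage gains the factor `Θ`, which outweighs the loss of
the proportion `p ^ (-τ)` when `τ` is large. The resulting nested boxes shrink to a point outside
all balls.
-/

open Filter Topology MeasureTheory Metric
open scoped ENNReal NNReal Matrix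

section Partitions

variable {X ι : Type*} {Y : ℕ → Type*} {π : ∀ n, X → Y n}

/-- `A` is a union of fibers of `f`. The fibers of a locally constant map are the cells of a
partition of the space, and this says that the partition is fine enough to resolve `A`. -/
def IsUnionOfFibers {Z : Type*} (f : X → Z) (A : Set X) : Prop :=
  ∀ ⦃x y⦄, f x = f y → x ∈ A → y ∈ A

/-- A sequence of maps whose fibers form successively finer partitions into clopen cells; the
cell of `x` at stage `n` is `π n ⁻¹' {π n x}`. -/
structure IsPartitionTower [TopologicalSpace X] (π : ∀ n, X → Y n) : Prop where
  isLocallyConstant (n : ℕ) : IsLocallyConstant (π n)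
  eq_of_succ (n : ℕ) ⦃x y : X⦄ : π (n + 1) x = π (n + 1) y → π n x = π n y

namespace IsUnionOfFibers

variable {Z : Type*} {f : X → Z} {A B : Set X}

theorem inter (hA : IsUnionOfFibers f A) (hB : IsUnionOfFibers f B) :
    IsUnionOfFibers f (A ∩ B) :=
  fun _ _ hxy hx ↦ ⟨hA hxy hx.1, hB hxy hx.2⟩

theorem preimage_image_eq (hA : IsUnionOfFibers f A) : f ⁻¹' (f '' A) = A :=
  Subset.antisymm (fun _ ⟨_, hx, hxy⟩ ↦ hA hxy hx) (subset_preimage_image f A)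

theorem mono_of_isPartitionTower [TopologicalSpace X] (hπ : IsPartitionTower π) {k n : ℕ}
    (hA : IsUnionOfFibers (π k) A) (hkn : k ≤ n) : IsUnionOfFibers (π n) A := by
  induction hkn with
  | refl => exact hA
  | step _ ih => exact fun _ _ hxy ↦ ih (hπ.eq_of_succ _ hxy)

theorem measurableSet [TopologicalSpace X] [MeasurableSpace X] [OpensMeasurableSpace X]
    (hA : IsUnionOfFibers f A) (hf : IsLocallyConstant f) : MeasurableSet A :=
  hA.preimage_image_eq ▸ (hf _).measurableSet

theorem measure_le_of_forall_fiber_le [TopologicalSpace X] [CompactSpace X] [MeasurableSpace X]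
    [OpensMeasurableSpace X] {μ ν : Measure X} (hA : IsUnionOfFibers f A)
    (hf : IsLocallyConstant f) (h : ∀ x ∈ A, μ (f ⁻¹' {f x}) ≤ ν (f ⁻¹' {f x})) : μ A ≤ ν A := by
  have hcount : (f '' A).Countable := (hf.range_finite.subset (image_subset_range f A)).countable
  have hsum (ρ : Measure X) : ρ A = ∑' y : f '' A, ρ (f ⁻¹' {(y : Z)}) := by
    conv_lhs => rw [← hA.preimage_image_eq, ← biUnion_preimage_singleton]
    exact measure_biUnion hcount (pairwiseDisjoint_fiber f _) fun y _ ↦ (hf {y}).measurableSet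
  rw [hsum μ, hsum ν]
  exact ENNReal.tsum_le_tsum fun ⟨_, x, hx, hxy⟩ ↦ hxy ▸ h x hx

end IsUnionOfFibers

theorem IsPartitionTower.exists_forall_mem_fiber [TopologicalSpace X] [CompactSpace X]
    (hπ : IsPartitionTower π) {x : ℕ → X} (hx : ∀ n, π n (x (n + 1)) = π n (x n)) :
    ∃ y, ∀ n, π n y = π n (x n) := by
  have hclosed (n) : IsClosed (π n ⁻¹' {π n (x n)}) := (hπ.isLocallyConstant n).isClosed_fiber _
  obtain ⟨y, hy⟩ := IsCompact.nonempty_iInter_of_sequence_nonempty_isCompact_isClosed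
    (fun n ↦ π n ⁻¹' {π n (x n)}) (fun n y hy ↦ (hπ.eq_of_succ n hy).trans (hx n))
    (fun n ↦ ⟨x n, rfl⟩) (hclosed 0).isCompact hclosed
  exact ⟨y, mem_iInter.1 hy⟩

variable [MeasurableSpace X] {μ : Measure X} {Θ : ℝ≥0∞} {m : ι → ℕ} {B : ι → Set X} {n : ℕ}

/-- The potential, as seen from stage `n`, of sets `B i` that are resolved at stage `m i`: a set
is charged a factor `Θ` for every stage still to come before `m i`, hence nothing extra once
`m i ≤ n` (the subtraction is truncated). -/
noncomputable def coverPotential (μ : Measure X) (Θ : ℝ≥0∞) (m : ι → ℕ) (B : ι → Set X) (n : ℕ) :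
    Measure X :=
  .sum fun i ↦ Θ ^ (m i - n) • μ.restrict (B i)

theorem coverPotential_apply {A : Set X} (hA : MeasurableSet A) :
    coverPotential μ Θ m B n A = ∑' i, Θ ^ (m i - n) * μ (A ∩ B i) := by
  simp only [coverPotential, Measure.sum_apply _ hA, Measure.smul_apply,
    Measure.restrict_apply hA, smul_eq_mul]

theorem mul_coverPotential_succ_le {A : Set X} (hA : MeasurableSet A)
    (hdisj : ∀ i, m i ≤ n → Disjoint A (B i)) :
    Θ * coverPotential μ Θ m B (n + 1) A ≤ coverPotential μ Θ m B n A := by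
  rw [coverPotential_apply hA, coverPotential_apply hA, ← ENNReal.tsum_mul_left]
  refine ENNReal.tsum_le_tsum fun i ↦ ?_
  rcases le_or_gt (m i) n with hi | hi
  · simp [(hdisj i hi).inter_eq]
  · rw [← mul_assoc, ← pow_succ', show m i - (n + 1) + 1 = m i - n by lia]

namespace IsPartitionTower

variable [TopologicalSpace X] [OpensMeasurableSpace X]

theorem disjoint_of_coverPotential_lt (hπ : IsPartitionTower π)
    (hB : ∀ i, IsUnionOfFibers (π (m i)) (B i)) {c : X}
    (hc : coverPotential μ Θ m B n (π n ⁻¹' {π n c}) < μ (π n ⁻¹' {π n c}))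
    {i : ι} (hi : m i ≤ n) : Disjoint (π n ⁻¹' {π n c}) (B i) := by
  rw [Set.disjoint_left]
  intro x (hx : π n x = π n c) hxB
  refine hc.not_ge ?_
  have hsub : π n ⁻¹' {π n c} ⊆ B i := fun y (hy : π n y = π n c) ↦
    (hB i).mono_of_isPartitionTower hπ hi (hx.trans hy.symm) hxB
  rw [coverPotential_apply (hπ.isLocallyConstant n _).measurableSet]
  refine le_trans ?_ (ENNReal.le_tsum i)
  rw [inter_eq_left.2 hsub, Nat.sub_eq_zero_of_le hi, pow_zero, one_mul]

variable [CompactSpace X]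

theorem exists_mem_coverPotential_succ_lt (hπ : IsPartitionTower π)
    (hB : ∀ i, IsUnionOfFibers (π (m i)) (B i)) {G : Set X}
    (hG : IsUnionOfFibers (π (n + 1)) G) {c : X}
    (hGc : μ (π n ⁻¹' {π n c}) ≤ Θ * μ (π n ⁻¹' {π n c} ∩ G))
    (hc : coverPotential μ Θ m B n (π n ⁻¹' {π n c}) < μ (π n ⁻¹' {π n c})) :
    ∃ x ∈ π n ⁻¹' {π n c} ∩ G, coverPotential μ Θ m B (n + 1) (π (n + 1) ⁻¹' {π (n + 1) x}) <
      μ (π (n + 1) ⁻¹' {π (n + 1) x}) := by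
  by_contra! hcon
  set C := π n ⁻¹' {π n c}
  have hCG : IsUnionOfFibers (π (n + 1)) (C ∩ G) :=
    IsUnionOfFibers.inter (fun x y hxy (hx : π n x = π n c) ↦
      (hπ.eq_of_succ n hxy).symm.trans hx) hG
  have hCGμ : μ (C ∩ G) ≤ coverPotential μ Θ m B (n + 1) (C ∩ G) :=
    hCG.measure_le_of_forall_fiber_le (hπ.isLocallyConstant _) hcon
  refine hc.not_ge ?_
  calc μ C ≤ Θ * μ (C ∩ G) := hGc
    _ ≤ Θ * coverPotential μ Θ m B (n + 1) (C ∩ G) := mul_le_mul_right hCGμ _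
    _ ≤ coverPotential μ Θ m B n (C ∩ G) :=
        mul_coverPotential_succ_le (hCG.measurableSet (hπ.isLocallyConstant _)) fun i hi ↦
          (hπ.disjoint_of_coverPotential_lt hB hc hi).mono_left inter_subset_left
    _ ≤ coverPotential μ Θ m B n C := measure_mono inter_subset_left

theorem exists_forall_mem_forall_notMem (hπ : IsPartitionTower π)
    (hB : ∀ i, IsUnionOfFibers (π (m i)) (B i)) {G : ℕ → Set X}
    (hG : ∀ n, IsUnionOfFibers (π (n + 1)) (G n))
    (hGμ : ∀ n c, μ (π n ⁻¹' {π n c}) ≤ Θ * μ (π n ⁻¹' {π n c} ∩ G n)) {c : X}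
    (hc : ∑' i, Θ ^ m i * μ (B i) < μ (π 0 ⁻¹' {π 0 c})) :
    ∃ x, π 0 x = π 0 c ∧ (∀ n, x ∈ G n) ∧ ∀ i, x ∉ B i := by
  have hstart : coverPotential μ Θ m B 0 (π 0 ⁻¹' {π 0 c}) < μ (π 0 ⁻¹' {π 0 c}) := by
    rw [coverPotential_apply (hπ.isLocallyConstant 0 _).measurableSet]
    exact (ENNReal.tsum_le_tsum fun i ↦
      mul_le_mul_right (measure_mono inter_subset_right) _).trans_lt hc
  choose! next hnext hnext_lt using fun n c ↦
    hπ.exists_mem_coverPotential_succ_lt hB (hG n) (hGμ n c)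
  let x : ℕ → X := Nat.rec c next
  have hx (n) : coverPotential μ Θ m B n (π n ⁻¹' {π n (x n)}) < μ (π n ⁻¹' {π n (x n)}) := by
    induction n with
    | zero => exact hstart
    | succ n ih => exact hnext_lt n (x n) ih
  have hx_succ (n) : x (n + 1) ∈ π n ⁻¹' {π n (x n)} ∩ G n := hnext n (x n) (hx n)
  obtain ⟨y, hy⟩ := hπ.exists_forall_mem_fiber fun n ↦ (hx_succ n).1
  exact ⟨y, hy 0, fun n ↦ hG n (hy (n + 1)).symm (hx_succ n).2, fun i ↦
    Set.disjoint_left.1 (hπ.disjoint_of_coverPotential_lt hB (hx (m i)) le_rfl) (hy (m i))⟩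

end IsPartitionTower

end Partitions

section HausdorffMeasure

variable {X : Type*} [MetricSpace X] {ρ s : ℝ}

theorem exists_nat_ofReal_pow_rpow_le (hρ₀ : 0 < ρ) (hρ₁ : ρ < 1) (hs : 0 < s) {ε : ℝ≥0∞}
    (hε : 0 < ε) : ∃ m : ℕ, ENNReal.ofReal (ρ ^ m) ^ s ≤ ε := by
  have hlt : ENNReal.ofReal ρ ^ s < 1 :=
    ENNReal.rpow_lt_one (ENNReal.ofReal_lt_one.2 hρ₁) hs
  obtain ⟨m, hm⟩ :=
    ((ENNReal.tendsto_pow_atTop_nhds_zero_of_lt_one hlt).eventually_lt_const hε).exists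
  refine ⟨m, le_of_eq_of_le ?_ hm.le⟩
  rw [ENNReal.ofReal_pow hρ₀.le, ← ENNReal.rpow_natCast, ← ENNReal.rpow_natCast,
    ← ENNReal.rpow_mul, ← ENNReal.rpow_mul, mul_comm]

theorem exists_nat_subset_closedBall_pow (hρ₀ : 0 < ρ) (hρ₁ : ρ < 1) {E : Set X}
    (hE : E.Nontrivial) (hE₁ : ediam E ≤ 1) {y : X} (hy : y ∈ E) :
    ∃ m : ℕ, E ⊆ closedBall y (ρ ^ m) ∧
      ENNReal.ofReal (ρ ^ m) ≤ ENNReal.ofReal ρ⁻¹ * ediam E := by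
  have htop : ediam E ≠ ⊤ := ne_top_of_le_ne_top ENNReal.one_ne_top hE₁
  have hpos : 0 < diam E := ENNReal.toReal_pos (ediam_pos_iff.2 hE).ne' htop
  have hle : diam E ≤ 1 := ENNReal.toReal_le_of_le_ofReal zero_le_one (by simpa using hE₁)
  obtain ⟨m, hm, hm'⟩ := exists_nat_pow_near_of_lt_one hpos hle hρ₀ hρ₁
  refine ⟨m, fun z hz ↦ mem_closedBall.2 ((dist_le_diam_of_mem' htop hz hy).trans hm'), ?_⟩
  calc ENNReal.ofReal (ρ ^ m) = ENNReal.ofReal (ρ⁻¹ * ρ ^ (m + 1)) := by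
        rw [pow_succ', inv_mul_cancel_left₀ hρ₀.ne']
    _ ≤ ENNReal.ofReal (ρ⁻¹ * diam E) := by gcongr
    _ = ENNReal.ofReal ρ⁻¹ * ediam E := by
        rw [ENNReal.ofReal_mul (inv_pos.2 hρ₀).le, diam, ENNReal.ofReal_toReal htop]

theorem exists_subset_closedBall_pow_of_ediam_le_one [Nonempty X] (hρ₀ : 0 < ρ) (hρ₁ : ρ < 1)
    (hs : 0 < s) {E : Set X} (hE : ediam E ≤ 1) {ε : ℝ≥0∞} (hε : 0 < ε) :
    ∃ (y : X) (m : ℕ), E ⊆ closedBall y (ρ ^ m) ∧ ENNReal.ofReal (ρ ^ m) ^ s ≤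
      ENNReal.ofReal ρ⁻¹ ^ s * (⨆ _ : E.Nonempty, ediam E ^ s) + ε := by
  rcases E.subsingleton_or_nontrivial with hE' | hE'
  · obtain ⟨m, hm⟩ := exists_nat_ofReal_pow_rpow_le hρ₀ hρ₁ hs hε
    obtain ⟨y, hy⟩ : ∃ y, E ⊆ {y} := hE'.eq_empty_or_singleton.elim
      (fun h ↦ ⟨Classical.arbitrary X, h ▸ empty_subset _⟩) fun ⟨y, h⟩ ↦ ⟨y, h.subset⟩
    exact ⟨y, m, hy.trans (singleton_subset_iff.2 (mem_closedBall_self (by positivity))),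
      hm.trans le_add_self⟩
  · obtain ⟨y, hy⟩ := hE'.nonempty
    obtain ⟨m, hsub, hm⟩ := exists_nat_subset_closedBall_pow hρ₀ hρ₁ hE' hE hy
    refine ⟨y, m, hsub, le_add_right ?_⟩
    rw [ciSup_pos hE'.nonempty, ← ENNReal.mul_rpow_of_nonneg _ _ hs.le]
    exact ENNReal.rpow_le_rpow hm hs.le

theorem hausdorffMeasure_ne_zero_of_forall_exists_notMem_closedBall [Nonempty X]
    [MeasurableSpace X] [BorelSpace X] (hρ₀ : 0 < ρ) (hρ₁ : ρ < 1) (hs : 0 < s) {A : Set X}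
    {δ : ℝ≥0∞} (hδ : δ ≠ 0)
    (hA : ∀ (y : ℕ → X) (m : ℕ → ℕ), ∑' i, ENNReal.ofReal (ρ ^ m i) ^ s < δ →
      ∃ x ∈ A, ∀ i, x ∉ closedBall (y i) (ρ ^ m i)) :
    μH[s] A ≠ 0 := by
  intro hzero
  have hδ2 : δ / 2 ≠ 0 := (ENNReal.half_pos hδ).ne'
  have hK0 : ENNReal.ofReal ρ⁻¹ ^ s ≠ 0 :=
    (ENNReal.rpow_pos (ENNReal.ofReal_pos.2 (inv_pos.2 hρ₀)) ENNReal.ofReal_ne_top).ne'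
  have hKtop : ENNReal.ofReal ρ⁻¹ ^ s ≠ ⊤ :=
    ENNReal.rpow_ne_top_of_nonneg hs.le ENNReal.ofReal_ne_top
  obtain ⟨E, hcover, hE₁, hE⟩ : ∃ E : ℕ → Set X, A ⊆ ⋃ i, E i ∧ (∀ i, ediam (E i) ≤ 1) ∧
      ∑' i, (⨆ _ : (E i).Nonempty, ediam (E i) ^ s) < δ / 2 / ENNReal.ofReal ρ⁻¹ ^ s := by
    rw [Measure.hausdorffMeasure_apply] at hzero
    have hlt := (le_of_eq (iSup₂_eq_bot.1 hzero 1 one_pos)).trans_lt (ENNReal.div_pos hδ2 hKtop)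
    simpa only [iInf_lt_iff, exists_prop] using hlt
  obtain ⟨ε, hε, hεδ⟩ := ENNReal.exists_pos_sum_of_countable' hδ2 ℕ
  choose y m hsub hm using fun i ↦
    exists_subset_closedBall_pow_of_ediam_le_one hρ₀ hρ₁ hs (hE₁ i) (hε i)
  obtain ⟨x, hx, hnot⟩ := hA y m <| calc
    _ ≤ ∑' i, (ENNReal.ofReal ρ⁻¹ ^ s * (⨆ _ : (E i).Nonempty, ediam (E i) ^ s) + ε i) :=
        ENNReal.tsum_le_tsum hm
    _ = ENNReal.ofReal ρ⁻¹ ^ s * ∑' i, (⨆ _ : (E i).Nonempty, ediam (E i) ^ s) + ∑' i, ε i := by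
        rw [ENNReal.tsum_add, ENNReal.tsum_mul_left]
    _ < δ / 2 + δ / 2 := by
        refine ENNReal.add_lt_add ?_ hεδ
        rw [mul_comm]
        exact (ENNReal.lt_div_iff_mul_lt (.inl hK0) (.inl hKtop)).1 hE
    _ = δ := ENNReal.add_halves δ
  obtain ⟨i, hi⟩ := mem_iUnion.1 (hcover hx)
  exact hnot i (hsub i hi)

end HausdorffMeasure

section SimplexLemma

theorem exists_ne_zero_forall_dotProduct_eq_zero {K n : Type*} [Field K] [Fintype n]
    [DecidableEq n] {V : Set (n → K)} (hV : ∀ M : Matrix n n K, (∀ i, M i ∈ V) → M.det = 0) :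
    ∃ a ≠ 0, ∀ v ∈ V, a ⬝ᵥ v = 0 := by
  have hspan : Submodule.span K V < ⊤ := by
    refine lt_top_iff_ne_top.2 fun htop ↦ ?_
    obtain ⟨f, hfV, -, hf⟩ := Submodule.exists_fun_fin_finrank_span_eq K V
    have hcard : Fintype.card n = Module.finrank K (Submodule.span K V) := by
      rw [htop, finrank_top, Module.finrank_fintype_fun_eq_card]
    let e : n ≃ Fin (Module.finrank K (Submodule.span K V)) := Fintype.equivFinOfCardEq hcard
    have hunit : IsUnit (Matrix.of (f ∘ e)) :=
      Matrix.linearIndependent_rows_iff_isUnit.1 (hf.comp e e.injective)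
    exact ((Matrix.isUnit_iff_isUnit_det _).1 hunit).ne_zero (hV _ fun i ↦ hfV (e i))
  obtain ⟨f, hf, hker⟩ := Submodule.exists_le_ker_of_lt_top _ hspan
  refine ⟨(dotProductEquiv K n).symm f, by simpa using hf, fun v hv ↦ ?_⟩
  change dotProductEquiv K n ((dotProductEquiv K n).symm f) v = 0
  rw [LinearEquiv.apply_symm_apply]
  exact hker (Submodule.subset_span hv)

variable {ι : Type*} [Fintype ι] [DecidableEq ι]

theorem prod_dvd_det_of_forall_dvd {R : Type*} [CommRing R] {M : Matrix (Unit ⊕ ι) (Unit ⊕ ι) R}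
    {c d : ι → R} (h : ∀ j i, d i ∣ M j (.inl ()) * c i - M j (.inr i)) : ∏ i, d i ∣ M.det := by
  choose e he using h
  have hfactor : M = Matrix.of (fun j ↦ Sum.elim (fun _ ↦ M j (.inl ())) fun i ↦ -e j i) *
      Matrix.fromBlocks 1 (Matrix.of fun _ ↦ c) 0 (Matrix.diagonal d) := by
    ext j (_ | i)
    · simp [Matrix.mul_apply]
    · have := he j i
      simp only [Matrix.mul_apply, Matrix.of_apply, Fintype.sum_sum_type,
        Matrix.fromBlocks_apply₁₂, Matrix.fromBlocks_apply₂₂, Sum.elim_inl, Sum.elim_inr,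
        Matrix.diagonal_apply, Finset.univ_unique, Finset.sum_singleton, mul_ite, mul_zero,
        Finset.sum_ite_eq', Finset.mem_univ, if_true]
      linear_combination -this
  rw [hfactor, Matrix.det_mul, Matrix.det_fromBlocks_zero₂₁, Matrix.det_one, one_mul,
    Matrix.det_diagonal]
  exact dvd_mul_left _ _

theorem det_eq_zero_of_forall_pow_dvd {p : ℕ} [Fact p.Prime] {k : ι → ℕ} {T : ℕ}
    {M : Matrix (Unit ⊕ ι) (Unit ⊕ ι) ℤ} {c : ι → ℤ_[p]} (hM : ∀ i j, |M i j| ≤ T)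
    (hdvd : ∀ j i, (p : ℤ_[p]) ^ k i ∣ M j (.inl ()) * c i - M j (.inr i))
    (hT : (Fintype.card ι + 1).factorial * T ^ (Fintype.card ι + 1) < p ^ ∑ i, k i) :
    M.det = 0 := by
  have hdet : ((p ^ ∑ i, k i : ℕ) : ℤ) ∣ M.det := by
    have := prod_dvd_det_of_forall_dvd (M := M.map (Int.castRingHom ℤ_[p])) hdvd
    rw [Finset.prod_pow_eq_pow_sum, ← RingHom.mapMatrix_apply, ← RingHom.map_det] at this
    exact_mod_cast PadicInt.pow_p_dvd_int_iff _ _ |>.1 this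
  have hle : |M.det| ≤ (Fintype.card ι + 1).factorial * (T : ℤ) ^ (Fintype.card ι + 1) := by
    simpa [add_comm] using Matrix.det_le (abv := AbsoluteValue.abs) hM
  exact Int.eq_zero_of_abs_lt_dvd hdet (hle.trans_lt (by exact_mod_cast hT))

end SimplexLemma

section Residues

open PadicInt

variable (p : ℕ) [hp : Fact p.Prime] {ι : Type*}

/-- Reduction of the `i`-th coordinate modulo `p ^ k i`. Its fibers are the boxes with side lengths
`p ^ (-k i)`, which serve as the cells of all constructions below. -/
noncomputable def padicResidue (k : ι → ℕ) : (ι → ℤ_[p]) →+* ∀ i, ZMod (p ^ k i) :=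
  RingHom.pi fun i ↦ (toZModPow (k i)).comp (Pi.evalRingHom _ i)

variable {p} {k l : ι → ℕ} {x y : ι → ℤ_[p]}

theorem padicResidue_eq_iff :
    padicResidue p k x = padicResidue p k y ↔ ∀ i, (p : ℤ_[p]) ^ k i ∣ x i - y i := by
  simp only [funext_iff]
  refine forall_congr' fun i ↦ ?_
  change toZModPow (k i) (x i) = toZModPow (k i) (y i) ↔ _
  rw [← sub_eq_zero, ← map_sub, ← RingHom.mem_ker, ker_toZModPow, Ideal.mem_span_singleton]

theorem padicResidue_eq_of_le (hkl : k ≤ l) (h : padicResidue p l x = padicResidue p l y) :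
    padicResidue p k x = padicResidue p k y :=
  padicResidue_eq_iff.2 fun i ↦ (pow_dvd_pow _ (hkl i)).trans (padicResidue_eq_iff.1 h i)

theorem padicResidue_surjective (k : ι → ℕ) : Function.Surjective (padicResidue p k) := by
  intro y
  choose x hx using fun i ↦ ZMod.ringHom_surjective (toZModPow (p := p) (k i)) (y i)
  exact ⟨x, funext hx⟩

theorem padicInt_pow_dvd_iff_norm_le {a : ℤ_[p]} {n : ℕ} :
    (p : ℤ_[p]) ^ n ∣ a ↔ ‖a‖ ≤ (p : ℝ)⁻¹ ^ n := by
  rw [← Ideal.mem_span_singleton, ← norm_le_pow_iff_mem_span_pow, zpow_neg, zpow_natCast, inv_pow]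

variable [Fintype ι]

theorem padicResidue_fiber_const (n : ℕ) (x : ι → ℤ_[p]) :
    padicResidue p (fun _ ↦ n) ⁻¹' {padicResidue p (fun _ ↦ n) x} =
      closedBall x ((p : ℝ)⁻¹ ^ n) := by
  ext y
  rw [mem_closedBall, dist_eq_norm, pi_norm_le_iff_of_nonneg (by positivity)]
  exact padicResidue_eq_iff.trans (forall_congr' fun i ↦ padicInt_pow_dvd_iff_norm_le)

omit [Fintype ι] in
theorem isLocallyConstant_padicResidue [Finite ι] (k : ι → ℕ) :
    IsLocallyConstant (padicResidue p k) := by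
  cases nonempty_fintype ι
  rw [IsLocallyConstant.iff_eventually_eq]
  intro x
  have hle : k ≤ fun _ ↦ ∑ i, k i := fun i ↦
    Finset.single_le_sum_of_canonicallyOrdered (Finset.mem_univ i)
  have hpos : 0 < (p : ℝ)⁻¹ ^ ∑ i, k i := pow_pos (inv_pos.2 (Nat.cast_pos.2 hp.1.pos)) _
  filter_upwards [closedBall_mem_nhds x hpos] with y hy
  rw [← padicResidue_fiber_const] at hy
  exact padicResidue_eq_of_le hle hy

theorem ofReal_natCast_inv_pow {a : ℕ} (ha : 0 < a) (n : ℕ) :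
    ENNReal.ofReal ((a : ℝ)⁻¹ ^ n) = (a : ℝ≥0∞)⁻¹ ^ n := by
  rw [ENNReal.ofReal_pow (by positivity), ENNReal.ofReal_inv_of_pos (by exact_mod_cast ha),
    ENNReal.ofReal_natCast]

theorem ediam_padicResidue_fiber_const_le (n : ℕ) (g : ∀ _ : ι, ZMod (p ^ n)) :
    ediam (padicResidue p (fun _ ↦ n) ⁻¹' {g}) ≤ 2 * (p : ℝ≥0∞)⁻¹ ^ n := by
  obtain ⟨x, rfl⟩ := padicResidue_surjective _ g
  rw [padicResidue_fiber_const, ← closedEBall_ofReal (by positivity),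
    ofReal_natCast_inv_pow hp.1.pos]
  exact ediam_closedEBall_le

theorem dimH_univ_padic_le : dimH (univ : Set (ι → ℤ_[p])) ≤ Fintype.card ι := by
  classical
  borelize (ι → ℤ_[p])
  have hsum (n : ℕ) : ∑ g : ι → ZMod (p ^ n),
      ediam (padicResidue p (fun _ ↦ n) ⁻¹' {g}) ^ ((Fintype.card ι : ℝ≥0) : ℝ) ≤
        2 ^ Fintype.card ι := by
    calc _ ≤ ∑ _g : ι → ZMod (p ^ n), (2 * (p : ℝ≥0∞)⁻¹ ^ n) ^ Fintype.card ι := by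
          simp only [NNReal.coe_natCast, ENNReal.rpow_natCast]
          gcongr
          exact ediam_padicResidue_fiber_const_le n _
      _ = (p * (p : ℝ≥0∞)⁻¹) ^ (n * Fintype.card ι) * 2 ^ Fintype.card ι := by
          rw [Finset.sum_const, Finset.card_univ, Fintype.card_fun, ZMod.card, nsmul_eq_mul]
          push_cast
          ring
      _ = 2 ^ Fintype.card ι := by
          rw [ENNReal.mul_inv_cancel (Nat.cast_ne_zero.2 hp.1.ne_zero) (ENNReal.natCast_ne_top p),
            one_pow, one_mul]
  have hr : Tendsto (fun n : ℕ ↦ 2 * (p : ℝ≥0∞)⁻¹ ^ n) atTop (𝓝 0) := by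
    have hp₁ : (p : ℝ≥0∞)⁻¹ < 1 := ENNReal.inv_lt_one.2 (by exact_mod_cast hp.1.one_lt)
    simpa only [mul_zero] using ENNReal.Tendsto.const_mul
      (ENNReal.tendsto_pow_atTop_nhds_zero_of_lt_one hp₁) (.inr ENNReal.ofNat_ne_top)
  refine dimH_le_of_hausdorffMeasure_ne_top (d := Fintype.card ι) (ne_top_of_le_ne_top
    (ENNReal.pow_ne_top ENNReal.ofNat_ne_top : (2 : ℝ≥0∞) ^ Fintype.card ι ≠ ⊤) ?_)
  refine (Measure.hausdorffMeasure_le_liminf_sum (ι := fun n ↦ ι → ZMod (p ^ n)) _ univ _ hr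
    (fun n g ↦ padicResidue p (fun _ ↦ n) ⁻¹' {g})
    (.of_forall ediam_padicResidue_fiber_const_le)
    (.of_forall fun n x _ ↦ mem_iUnion.2 ⟨_, rfl⟩)).trans ?_
  exact (liminf_le_liminf (.of_forall hsum)).trans (by simp)

end Residues

section InvariantMeasure

open scoped Pointwise

theorem card_mul_measure_fiber {G H : Type*} [AddGroup G] [MeasurableSpace G] [MeasurableAdd G]
    {μ : Measure G} [μ.IsAddLeftInvariant] [AddGroup H] [Fintype H] {f : G →+ H}
    (hf : Function.Surjective f) (hmeas : ∀ y, MeasurableSet (f ⁻¹' {y})) (x : G) :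
    Fintype.card H * μ (f ⁻¹' {f x}) = μ univ := by
  have hfiber (y : H) : μ (f ⁻¹' {y}) = μ (f ⁻¹' {f x}) := by
    obtain ⟨g, rfl⟩ := hf y
    rw [← measure_preimage_add μ (g + -x)]
    congr 1
    ext z
    simp [add_assoc, neg_add_eq_zero, @eq_comm _ (f z)]
  calc Fintype.card H * μ (f ⁻¹' {f x}) = ∑ y, μ (f ⁻¹' {y}) := by simp [hfiber]
    _ = μ (⋃ y, f ⁻¹' {y}) := by
        rw [measure_iUnion (fun _ _ h ↦ disjoint_singleton.2 h |>.preimage f) hmeas, tsum_fintype]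
    _ = μ univ := by rw [← preimage_iUnion, iUnion_of_singleton, preimage_univ]

theorem card_mul_measure_le_of_pairwise_disjoint_vadd {G κ : Type*} [AddGroup G]
    [MeasurableSpace G] [MeasurableAdd G] {μ : Measure G} [μ.IsAddLeftInvariant] [Fintype κ]
    {v : κ → G} {N C : Set G} (hN : MeasurableSet N) (hsub : ∀ j, v j +ᵥ N ⊆ C)
    (hdisj : Pairwise (Function.onFun Disjoint fun j ↦ v j +ᵥ N)) :
    Fintype.card κ * μ N ≤ μ C :=
  calc Fintype.card κ * μ N = ∑ j, μ (v j +ᵥ N) := by simp [measure_vadd]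
    _ = μ (⋃ j, v j +ᵥ N) := by
        rw [measure_iUnion hdisj fun j ↦ hN.const_vadd _, tsum_fintype]
    _ ≤ μ C := measure_mono (iUnion_subset hsub)

end InvariantMeasure

section FarFromRationals

open PadicInt

variable (p : ℕ) [hp : Fact p.Prime] {ι : Type*}

/-- The points at which no rational point `z / q` with `p ∤ q` and height at most `T` approximates
all coordinates simultaneously, the `i`-th one to precision `p ^ (-k i)`. -/
def padicFarFromRationals (T : ℕ) (k : ι → ℕ) : Set (ι → ℤ_[p]) :=
  {x | ∀ (q : ℕ) (z : ι → ℤ), ¬p ∣ q → q ≤ T → (∀ i, |z i| ≤ T) →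
    ∃ i, ¬(p : ℤ_[p]) ^ k i ∣ q * x i - z i}

variable {p} {T : ℕ} {k l : ι → ℕ}

theorem isUnionOfFibers_padicFarFromRationals :
    IsUnionOfFibers (padicResidue p k) (padicFarFromRationals p T k) := by
  intro x y hxy hx q z hpq hqT hzT
  obtain ⟨i, hi⟩ := hx q z hpq hqT hzT
  refine ⟨i, fun hy ↦ hi ?_⟩
  rw [show q * x i - z i = q * (x i - y i) + (q * y i - z i) by ring]
  exact dvd_add (dvd_mul_of_dvd_right (padicResidue_eq_iff.1 hxy i) _) hy

variable [Fintype ι]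

theorem norm_add_dotProduct_le_of_pow_dvd {A : ℚ_[p]} {B : ι → ℚ_[p]} {x : ι → ℤ_[p]} {q : ℕ}
    {z : ι → ℤ} {δ : ℝ} (hδ : 0 ≤ δ) (hrel : A * q + ∑ i, B i * z i = 0) (hpq : ¬p ∣ q)
    (hx : ∀ i, (p : ℤ_[p]) ^ k i ∣ q * x i - z i) (hB : ∀ i, ‖B i‖ * (p : ℝ)⁻¹ ^ k i ≤ δ) :
    ‖A + ∑ i, B i * x i‖ ≤ δ := by
  have hq : ‖(q : ℚ_[p])‖ = 1 :=
    Padic.norm_natCast_eq_one_iff.2 ((Nat.Prime.coprime_iff_not_dvd hp.1).2 hpq)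
  have hsum : q * (A + ∑ i, B i * x i) = ∑ i, B i * (q * x i - z i) := by
    simp only [mul_sub, Finset.sum_sub_distrib, mul_add, Finset.mul_sum,
      mul_left_comm (q : ℚ_[p])]
    linear_combination hrel
  calc ‖A + ∑ i, B i * x i‖ = ‖q * (A + ∑ i, B i * x i)‖ := by rw [norm_mul, hq, one_mul]
    _ = ‖∑ i, B i * (q * x i - z i)‖ := by rw [hsum]
    _ ≤ δ := by
      refine IsUltrametricDist.norm_sum_le_of_forall_le_of_nonneg hδ fun i _ ↦ ?_
      rw [norm_mul]
      refine le_trans ?_ (hB i)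
      gcongr
      exact_mod_cast padicInt_pow_dvd_iff_norm_le.1 (hx i)

theorem exists_linear_relation_of_pow_dvd
    (hT : (Fintype.card ι + 1).factorial * T ^ (Fintype.card ι + 1) < p ^ ∑ i, k i)
    (c : ι → ℤ_[p]) :
    ∃ (A : ℚ_[p]) (B : ι → ℚ_[p]), (A ≠ 0 ∨ B ≠ 0) ∧ ∀ (q : ℕ) (z : ι → ℤ), q ≤ T →
      (∀ i, |z i| ≤ T) → (∀ i, (p : ℤ_[p]) ^ k i ∣ q * c i - z i) →
        A * q + ∑ i, B i * z i = 0 := by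
  classical
  let W : Set (Unit ⊕ ι → ℤ) := {w | (∀ j, |w j| ≤ T) ∧
    ∀ i, (p : ℤ_[p]) ^ k i ∣ w (.inl ()) * c i - w (.inr i)}
  have hdet (M : Matrix (Unit ⊕ ι) (Unit ⊕ ι) ℚ_[p])
      (hM : ∀ j, M j ∈ (fun w j ↦ ((w j : ℤ) : ℚ_[p])) '' W) : M.det = 0 := by
    choose w hw hwM using hM
    have hMw : M = (Int.castRingHom ℚ_[p]).mapMatrix (Matrix.of w) :=
      Matrix.ext fun i j ↦ (congrFun (hwM i) j).symm
    rw [hMw, ← RingHom.map_det,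
      det_eq_zero_of_forall_pow_dvd (M := .of w) (fun i ↦ (hw i).1) (fun i ↦ (hw i).2) hT,
      map_zero]
  obtain ⟨a, ha, hrel⟩ := exists_ne_zero_forall_dotProduct_eq_zero hdet
  refine ⟨a (.inl ()), fun i ↦ a (.inr i), ?_, fun q z hq hz hdvd ↦ ?_⟩
  · by_contra! h
    exact ha (funext (Sum.rec (fun _ ↦ h.1) (congrFun h.2)))
  · have hW : Sum.elim (fun _ ↦ (q : ℤ)) z ∈ W :=
      ⟨by simpa using ⟨mod_cast hq, hz⟩, by simpa using hdvd⟩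
    simpa [dotProduct] using hrel _ (mem_image_of_mem _ hW)

theorem exists_forall_norm_add_dotProduct_le [Nonempty ι]
    (hT : (Fintype.card ι + 1).factorial * T ^ (Fintype.card ι + 1) < p ^ ∑ i, k i)
    (hkl : k ≤ l) (c : ι → ℤ_[p]) :
    ∃ (A : ℚ_[p]) (B : ι → ℚ_[p]) (i : ι),
      ∀ x ∈ padicResidue p k ⁻¹' {padicResidue p k c} \ padicFarFromRationals p T l,
        B i ≠ 0 ∧ ‖A + ∑ j, B j * x j‖ ≤ ‖B i‖ * (p : ℝ)⁻¹ ^ l i := by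
  obtain ⟨A, B, hAB, hrel⟩ := exists_linear_relation_of_pow_dvd hT c
  obtain ⟨i, hi⟩ := Finite.exists_max fun i ↦ ‖B i‖ * (p : ℝ)⁻¹ ^ l i
  refine ⟨A, B, i, fun x hx ↦ ?_⟩
  obtain ⟨q, z, hpq, hq, hz, hdvd⟩ : ∃ (q : ℕ) (z : ι → ℤ), ¬p ∣ q ∧ q ≤ T ∧ (∀ i, |z i| ≤ T) ∧
      ∀ i, (p : ℤ_[p]) ^ l i ∣ q * x i - z i := by
    simpa [padicFarFromRationals] using hx.2
  have hzero : A * q + ∑ j, B j * z j = 0 := by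
    refine hrel q z hq hz fun j ↦ ?_
    rw [show q * c j - z j = (q * x j - z j) - q * (x j - c j) by ring]
    exact dvd_sub ((pow_dvd_pow _ (hkl j)).trans (hdvd j))
      (dvd_mul_of_dvd_right (padicResidue_eq_iff.1 hx.1 j) _)
  refine ⟨fun hBi ↦ ?_, norm_add_dotProduct_le_of_pow_dvd (by positivity) hzero hpq hdvd hi⟩
  have hB : B = 0 := by
    funext j
    have hle : ‖B j‖ * (p : ℝ)⁻¹ ^ l j ≤ 0 := by simpa [hBi] using hi j
    have hpos : 0 < (p : ℝ)⁻¹ ^ l j := pow_pos (inv_pos.2 (Nat.cast_pos.2 hp.1.pos)) _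
    exact norm_le_zero_iff.1 (nonpos_of_mul_nonpos_left hle hpos)
  have hq₀ : (q : ℚ_[p]) ≠ 0 := Nat.cast_ne_zero.2 fun h ↦ hpq (h ▸ dvd_zero p)
  have hA : A = 0 := by simpa [hB, hq₀] using hzero
  exact hAB.elim (· hA) (· hB)

theorem exists_forall_pow_dvd_of_sub_eq_single [Nonempty ι] [DecidableEq ι]
    (hT : (Fintype.card ι + 1).factorial * T ^ (Fintype.card ι + 1) < p ^ ∑ i, k i)
    (hkl : k ≤ l) (c : ι → ℤ_[p]) :
    ∃ i, ∀ x ∈ padicResidue p k ⁻¹' {padicResidue p k c} \ padicFarFromRationals p T l,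
      ∀ y ∈ padicResidue p k ⁻¹' {padicResidue p k c} \ padicFarFromRationals p T l,
        ∀ s, y - x = Pi.single i s → (p : ℤ_[p]) ^ l i ∣ s := by
  obtain ⟨A, B, i, hAB⟩ := exists_forall_norm_add_dotProduct_le hT hkl c
  refine ⟨i, fun x hx y hy s hs ↦ ?_⟩
  have hdiff : (A + ∑ j, B j * y j) - (A + ∑ j, B j * x j) = B i * s := by
    calc _ = ∑ j, B j * (y - x) j := by simp [mul_sub]
      _ = B i * s := by
        rw [hs, Fintype.sum_eq_single i fun j hj ↦ by simp [hj], Pi.single_eq_same]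
  rw [padicInt_pow_dvd_iff_norm_le]
  refine le_of_mul_le_mul_left ?_ (norm_pos_iff.2 (hAB x hx).1)
  calc ‖B i‖ * ‖s‖ = ‖(A + ∑ j, B j * y j) - (A + ∑ j, B j * x j)‖ := by
        rw [hdiff, norm_mul, padic_norm_e_of_padicInt]
    _ ≤ max ‖A + ∑ j, B j * y j‖ ‖A + ∑ j, B j * x j‖ := by
        simpa only [dist_eq_norm, sub_zero, zero_sub, norm_neg] using
          dist_triangle_max (A + ∑ j, B j * y j) 0 (A + ∑ j, B j * x j)
    _ ≤ ‖B i‖ * (p : ℝ)⁻¹ ^ l i := max_le (hAB y hy).2 (hAB x hx).2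

theorem fin_eq_of_pow_add_dvd_sub_mul {a τ : ℕ} {j j' : Fin (p ^ τ)}
    (h : (p : ℤ_[p]) ^ (a + τ) ∣ (j - j') * (p : ℤ_[p]) ^ a) : j = j' := by
  have hpa : (p : ℤ_[p]) ^ a ≠ 0 := pow_ne_zero _ (Nat.cast_ne_zero.2 hp.1.ne_zero)
  have hdvd : (p : ℤ_[p]) ^ τ ∣ ((j - j' : ℤ) : ℤ_[p]) := by
    rw [pow_add, mul_comm, mul_dvd_mul_iff_right hpa] at h
    exact_mod_cast h
  have hmod : (j' : ℕ) ≡ j [MOD p ^ τ] :=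
    Nat.modEq_iff_dvd.2 (by simpa using (pow_p_dvd_int_iff _ _).1 hdvd)
  exact Fin.ext (hmod.eq_of_lt_of_lt j'.2 j.2).symm

open scoped Pointwise in
theorem pow_mul_measure_diff_padicFarFromRationals_le [Nonempty ι] [MeasurableSpace (ι → ℤ_[p])]
    [BorelSpace (ι → ℤ_[p])] {μ : Measure (ι → ℤ_[p])} [μ.IsAddLeftInvariant]
    (hT : (Fintype.card ι + 1).factorial * T ^ (Fintype.card ι + 1) < p ^ ∑ i, k i)
    {τ : ℕ} (hkl : ∀ i, k i + τ ≤ l i) (c : ι → ℤ_[p]) :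
    (p : ℝ≥0∞) ^ τ *
        μ (padicResidue p k ⁻¹' {padicResidue p k c} \ padicFarFromRationals p T l) ≤
      μ (padicResidue p k ⁻¹' {padicResidue p k c}) := by
  classical
  set C := padicResidue p k ⁻¹' {padicResidue p k c}
  obtain ⟨i, hi⟩ :=
    exists_forall_pow_dvd_of_sub_eq_single hT (fun j ↦ (Nat.le_add_right _ _).trans (hkl j)) c
  let v (j : Fin (p ^ τ)) : ι → ℤ_[p] := Pi.single i (j * (p : ℤ_[p]) ^ k i)
  have hmeas : MeasurableSet (C \ padicFarFromRationals p T l) :=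
    (isLocallyConstant_padicResidue k _).measurableSet.diff
      (isUnionOfFibers_padicFarFromRationals.measurableSet (isLocallyConstant_padicResidue l))
  have hv (j) : padicResidue p k (v j) = 0 := by
    rw [← map_zero (padicResidue p k), padicResidue_eq_iff]
    intro i'
    rcases eq_or_ne i' i with rfl | hi'
    · simp [v]
    · simp [v, hi']
  have hsub (j) : v j +ᵥ (C \ padicFarFromRationals p T l) ⊆ C := by
    rintro _ ⟨x, hx, rfl⟩
    change padicResidue p k (v j + x) = _
    rw [map_add, hv, zero_add]
    exact hx.1
  have hdisj : Pairwise (Function.onFun Disjoint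
      fun j ↦ v j +ᵥ (C \ padicFarFromRationals p T l)) := by
    intro j j' hjj'
    refine Set.disjoint_left.2 ?_
    rintro _ ⟨x, hx, rfl⟩ ⟨y, hy, hxy⟩
    have hdvd : (p : ℤ_[p]) ^ l i ∣ (j - j') * (p : ℤ_[p]) ^ k i := by
      refine hi x hx y hy _ ?_
      rw [sub_mul, Pi.single_sub, sub_eq_sub_iff_add_eq_add, add_comm y]
      exact hxy
    exact hjj' (fin_eq_of_pow_add_dvd_sub_mul ((pow_dvd_pow _ (hkl i)).trans hdvd))
  simpa using card_mul_measure_le_of_pairwise_disjoint_vadd hmeas hsub hdisj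

end FarFromRationals

section StageExponents

variable {ι : Type*} {σ : ι → ℝ}

/-- The exponent `k` for which `p ^ (-k)` is the largest power of `p` not exceeding
`(p ^ (-a)) ^ σ i`. -/
noncomputable def weightedExponent (σ : ι → ℝ) (a : ℕ) (i : ι) : ℕ := ⌈σ i * a⌉₊

theorem weightedExponent_add_le {i : ι} (hσ : 0 ≤ σ i) {τ t : ℕ} (ht : τ ≤ σ i * t) (a : ℕ) :
    weightedExponent σ a i + τ ≤ weightedExponent σ (a + t) i := by
  rw [weightedExponent, weightedExponent, ← Nat.ceil_add_natCast (by positivity)]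
  refine Nat.ceil_mono ?_
  push_cast
  linarith

theorem weightedExponent_le {i : ι} (hσ : 0 ≤ σ i) {t : ℕ} (ht : 1 ≤ σ i * t) (a : ℕ) :
    (weightedExponent σ a i : ℝ) ≤ σ i * (a + t : ℕ) := by
  have := (Nat.ceil_lt_add_one (show 0 ≤ σ i * a by positivity)).le
  rw [weightedExponent]
  push_cast
  linarith

theorem eventually_forall_le_mul_natCast [Finite ι] (hσ : ∀ i, 0 < σ i) (b : ℝ) :
    ∀ᶠ a : ℕ in atTop, ∀ i, b ≤ σ i * a :=
  eventually_all.2 fun i ↦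
    (tendsto_natCast_atTop_atTop.const_mul_atTop (hσ i)).eventually_ge_atTop b

variable [Fintype ι]

theorem card_add_one_mul_le_sum_weightedExponent (hσ : Fintype.card ι + 1 ≤ ∑ i, σ i) (a : ℕ) :
    (Fintype.card ι + 1) * a ≤ ∑ i, weightedExponent σ a i := by
  have : ((Fintype.card ι + 1 : ℕ) * a : ℝ) ≤ ∑ i, (weightedExponent σ a i : ℝ) := calc
    _ ≤ ∑ i, σ i * a := by
      rw [← Finset.sum_mul]
      push_cast
      gcongr
    _ ≤ ∑ i, (weightedExponent σ a i : ℝ) := Finset.sum_le_sum fun i _ ↦ Nat.le_ceil _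
  exact_mod_cast this

theorem factorial_mul_pow_lt_pow_sum_weightedExponent {p b C : ℕ} (hp : 0 < p)
    (hσ : Fintype.card ι + 1 ≤ ∑ i, σ i)
    (hC : (Fintype.card ι + 1).factorial < p ^ ((Fintype.card ι + 1) * C)) :
    (Fintype.card ι + 1).factorial * (p ^ b) ^ (Fintype.card ι + 1) <
      p ^ ∑ i, weightedExponent σ (b + C) i :=
  calc _ < p ^ ((Fintype.card ι + 1) * C) * (p ^ b) ^ (Fintype.card ι + 1) := by gcongr
    _ = p ^ ((Fintype.card ι + 1) * (b + C)) := by ring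
    _ ≤ p ^ ∑ i, weightedExponent σ (b + C) i :=
        Nat.pow_le_pow_right hp (card_add_one_mul_le_sum_weightedExponent hσ _)

end StageExponents

section WeightedBad

open PadicInt

variable (p : ℕ) [hp : Fact p.Prime] {ι : Type*} [Fintype ι]

/-- The `r`-badly approximable points of `ℤ_p ^ ι`; the height of `z / q` is `max ‖z‖ q`, where
`‖z‖` is the maximum norm. -/
def weightedBad (r : ι → ℝ) : Set (ι → ℤ_[p]) :=
  {x | ∃ c : ℝ, 0 < c ∧ ∀ (z : ι → ℤ) (q : ℕ), 1 ≤ q →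
    ∃ i, (c / max ‖z‖ q) ^ (1 + r i) ≤ ‖(x i : ℚ_[p]) - z i / q‖}

variable {p}

omit [Fintype ι] in
theorem exists_coprime_denominator {x : ι → ℤ_[p]} {z : ι → ℤ} {q : ℕ} (hq : q ≠ 0)
    (hx : ∀ i, ‖(x i : ℚ_[p]) - z i / q‖ ≤ 1) :
    ∃ (q' : ℕ) (w : ι → ℤ), ¬p ∣ q' ∧ q' ≤ q ∧ (∀ i, |w i| ≤ |z i|) ∧
      ∀ i, ‖q' * x i - w i‖ = ‖(x i : ℚ_[p]) - z i / q‖ := by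
  obtain ⟨j, q', hpq', rfl⟩ := Nat.exists_eq_pow_mul_and_not_dvd hq p hp.1.ne_one
  have hq'₀ : q' ≠ 0 := fun h ↦ hpq' (h ▸ dvd_zero _)
  have hq' : ‖(q' : ℚ_[p])‖ = 1 :=
    Padic.norm_natCast_eq_one_iff.2 ((Nat.Prime.coprime_iff_not_dvd hp.1).2 hpq')
  have hpj : 1 ≤ p ^ j := Nat.one_le_pow _ _ hp.1.pos
  have hdvd (i : ι) : ((p ^ j : ℕ) : ℤ) ∣ z i := by
    have hz : ‖(z i : ℚ_[p]) / (p ^ j * q' : ℕ)‖ ≤ 1 := by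
      rw [← sub_sub_cancel (x i : ℚ_[p]) (z i / _), sub_eq_add_neg]
      exact (Padic.nonarchimedean _ _).trans
        (max_le (x i).norm_le_one ((norm_neg _).trans_le (hx i)))
    rw [Nat.cast_pow, ← Padic.norm_int_le_pow_iff_dvd]
    rw [norm_div, div_le_one₀ (norm_pos_iff.2 (Nat.cast_ne_zero.2 hq))] at hz
    simpa [hq'] using hz
  choose w hw using hdvd
  refine ⟨q', w, hpq', Nat.le_mul_of_pos_left q' hpj, fun i ↦ ?_, fun i ↦ ?_⟩
  · rw [hw, abs_mul, Nat.abs_cast]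
    exact le_mul_of_one_le_left (abs_nonneg _) (by exact_mod_cast hpj)
  · have hpQ : (p : ℚ_[p]) ≠ 0 := Nat.cast_ne_zero.2 hp.1.ne_zero
    have hfactor : (q' * x i - w i : ℚ_[p]) = q' * (x i - z i / (p ^ j * q' : ℕ)) := by
      rw [hw]
      push_cast
      field_simp
    calc ‖q' * x i - w i‖ = ‖(q' * x i - w i : ℚ_[p])‖ := by
          rw [norm_def]
          push_cast
          rfl
      _ = ‖(x i : ℚ_[p]) - z i / (p ^ j * q' : ℕ)‖ := by rw [hfactor, norm_mul, hq', one_mul]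

theorem rpow_le_inv_pow_of_le {σ H : ℝ} {k a b : ℕ} (hσ : 0 ≤ σ) (hH : (p : ℝ) ^ b ≤ H)
    (hk : k ≤ σ * (a + b : ℕ)) : (((p : ℝ)⁻¹ ^ a) / H) ^ σ ≤ (p : ℝ)⁻¹ ^ k := by
  have hp₀ : 0 < (p : ℝ) := Nat.cast_pos.2 hp.1.pos
  have hH₀ : 0 < H := (pow_pos hp₀ b).trans_le hH
  calc _ ≤ ((p : ℝ)⁻¹ ^ a / (p : ℝ) ^ b) ^ σ := by gcongr
    _ = (p : ℝ) ^ (-(σ * (a + b : ℕ))) := by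
      rw [inv_pow, div_eq_mul_inv, ← _root_.mul_inv, ← pow_add, ← Real.rpow_natCast,
        ← Real.rpow_neg hp₀.le, ← Real.rpow_mul hp₀.le]
      ring_nf
    _ ≤ (p : ℝ) ^ (-k : ℝ) :=
      Real.rpow_le_rpow_of_exponent_le (by exact_mod_cast hp.1.one_le) (neg_le_neg hk)
    _ = (p : ℝ)⁻¹ ^ k := by rw [Real.rpow_neg hp₀.le, Real.rpow_natCast, inv_pow]

theorem mem_weightedBad_of_forall_mem_padicFarFromRationals [Nonempty ι] {r : ι → ℝ}
    (hr : ∀ i, 0 ≤ 1 + r i) {t C : ℕ} (ht : ∀ i, 1 ≤ (1 + r i) * t) {x : ι → ℤ_[p]}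
    (hx : ∀ n, x ∈ padicFarFromRationals p (p ^ (t * n))
      (weightedExponent (fun i ↦ 1 + r i) (t * (n + 1) + C))) :
    x ∈ weightedBad p r := by
  have hp₁ : 1 < (p : ℝ) := by exact_mod_cast hp.1.one_lt
  have ht₀ : t ≠ 0 := by
    rintro rfl
    simpa using (ht (Classical.arbitrary ι)).not_gt
  refine ⟨(p : ℝ)⁻¹ ^ (3 * t + C), by positivity, fun z q hq ↦ ?_⟩
  by_contra! hcon
  set H : ℝ := max ‖z‖ q
  have hqH : q ≤ H := le_max_right _ _
  have hzH (i : ι) : ‖z i‖ ≤ H := (norm_le_pi_norm z i).trans (le_max_left _ _)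
  have hH₁ : 1 ≤ H := (Nat.one_le_cast.2 hq).trans hqH
  obtain ⟨n, hn, hn'⟩ := exists_nat_pow_near hH₁ (one_lt_pow₀ hp₁ ht₀)
  rw [← pow_mul] at hn hn'
  have hsmall (i : ι) : ‖(x i : ℚ_[p]) - z i / q‖ ≤
      (p : ℝ)⁻¹ ^ weightedExponent (fun i ↦ 1 + r i) (t * (n + 1 + 1) + C) i := by
    refine (hcon i).le.trans (rpow_le_inv_pow_of_le (hr i) hn ?_)
    refine (weightedExponent_le (hr i) (ht i) _).trans_eq ?_
    push_cast
    ring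
  obtain ⟨q', w, hpq', hq', hw, hnorm⟩ := exists_coprime_denominator (Nat.ne_of_gt hq) fun i ↦
    (hsmall i).trans (pow_le_one₀ (by positivity) (inv_le_one_of_one_le₀ hp₁.le))
  have hq'T : q' ≤ p ^ (t * (n + 1)) := by
    exact_mod_cast ((Nat.cast_le.2 hq').trans hqH).trans hn'.le
  have hwT (i : ι) : |w i| ≤ (p ^ (t * (n + 1)) : ℕ) := by
    have hwH : (|w i| : ℝ) ≤ H := by
      refine le_trans ?_ (hzH i)
      rw [Int.norm_eq_abs]
      exact_mod_cast hw i
    exact_mod_cast hwH.trans hn'.le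
  obtain ⟨i, hi⟩ := hx (n + 1) q' w hpq' hq'T hwT
  exact hi (padicInt_pow_dvd_iff_norm_le.2 ((hnorm i).trans_le (hsmall i)))

end WeightedBad

section CellLoss

theorem exists_one_add_mul_inv_pow_le {a Θ : ℝ≥0∞} (ha : 1 < a) (hΘ : 1 < Θ) (hΘ' : Θ ≠ ⊤) :
    ∃ τ, 1 ≤ τ ∧ 1 + Θ * (a ^ τ)⁻¹ ≤ Θ := by
  have hlim : Tendsto (fun τ : ℕ ↦ 1 + Θ * (a ^ τ)⁻¹) atTop (𝓝 1) := by
    simpa only [ENNReal.inv_pow, mul_zero, add_zero] using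
      (ENNReal.Tendsto.const_mul (ENNReal.tendsto_pow_atTop_nhds_zero_of_lt_one
        (ENNReal.inv_lt_one.2 ha)) (.inr hΘ')).const_add 1
  obtain ⟨τ, hτ, hle⟩ := ((eventually_ge_atTop 1).and (hlim.eventually_le_const hΘ)).exists
  exact ⟨τ, hτ, hle⟩

theorem measure_le_mul_measure_inter {X : Type*} [MeasurableSpace X] {μ : Measure X} {C G : Set X}
    {a Θ : ℝ≥0∞} (ha : a ≠ 0) (ha' : a ≠ ⊤) (hΘ : 1 + Θ * a⁻¹ ≤ Θ) (hΘ' : Θ ≠ ⊤) (hC : μ C ≠ ⊤)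
    (hloss : a * μ (C \ G) ≤ μ C) : μ C ≤ Θ * μ (C ∩ G) := by
  have hloss' : μ (C \ G) ≤ a⁻¹ * μ C := by
    rwa [mul_comm a⁻¹, ← div_eq_mul_inv, ENNReal.le_div_iff_mul_le (.inl ha) (.inl ha'), mul_comm]
  have hfin : Θ * a⁻¹ * μ C ≠ ⊤ :=
    ENNReal.mul_ne_top (ENNReal.mul_ne_top hΘ' (ENNReal.inv_ne_top.2 ha)) hC
  refine (ENNReal.add_le_add_iff_right hfin).1 ?_
  calc μ C + Θ * a⁻¹ * μ C = (1 + Θ * a⁻¹) * μ C := by ring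
    _ ≤ Θ * (μ (C ∩ G) + μ (C \ G)) := mul_le_mul' hΘ (measure_le_inter_add_sdiff μ C G)
    _ ≤ Θ * (μ (C ∩ G) + a⁻¹ * μ C) := by gcongr
    _ = Θ * μ (C ∩ G) + Θ * a⁻¹ * μ C := by ring

end CellLoss

section Dimension

theorem rpow_sub_pow_mul_inv_pow_pow {a : ℝ≥0∞} (ha : a ≠ 0) (ha' : a ≠ ⊤) (d : ℕ) (s : ℝ)
    (m : ℕ) : (a ^ (d - s)) ^ m * (a⁻¹ ^ m) ^ d = (a⁻¹ ^ m) ^ s := by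
  simp only [← ENNReal.rpow_natCast, ← ENNReal.rpow_neg_one, ← ENNReal.rpow_mul]
  rw [← ENNReal.rpow_add _ _ ha ha']
  ring_nf

variable {p : ℕ} [hp : Fact p.Prime] {ι : Type*}

theorem isPartitionTower_padicResidue [Finite ι] {k : ℕ → ι → ℕ} (hk : Monotone k) :
    IsPartitionTower fun n ↦ padicResidue p (k n) where
  isLocallyConstant n := isLocallyConstant_padicResidue (k n)
  eq_of_succ n _ _ := padicResidue_eq_of_le (hk n.le_succ)

variable [Fintype ι]

theorem isUnionOfFibers_closedBall {k : ι → ℕ} {m : ℕ} (hk : ∀ i, m ≤ k i) (y : ι → ℤ_[p]) :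
    IsUnionOfFibers (padicResidue p k) (closedBall y ((p : ℝ)⁻¹ ^ m)) := by
  rw [← padicResidue_fiber_const]
  exact fun x x' hxx' hx ↦ (padicResidue_eq_of_le hk hxx').symm.trans hx

omit [Fintype ι] in
theorem exists_padicResidue_fiber_subset [Finite ι] {U : Set (ι → ℤ_[p])} (hU : IsOpen U)
    {c : ι → ℤ_[p]} (hc : c ∈ U) : ∃ m : ℕ, ∀ k : ι → ℕ, (∀ i, m ≤ k i) →
      padicResidue p k ⁻¹' {padicResidue p k c} ⊆ U := by
  cases nonempty_fintype ι
  obtain ⟨ε, hε, hεU⟩ := nhds_basis_closedBall.mem_iff.1 (hU.mem_nhds hc)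
  obtain ⟨m, hm⟩ := exists_pow_lt_of_lt_one hε
    (inv_lt_one_of_one_lt₀ (Nat.one_lt_cast.2 hp.1.one_lt : (1 : ℝ) < p))
  refine ⟨m, fun k hk x hx ↦ hεU (closedBall_subset_closedBall hm.le ?_)⟩
  exact isUnionOfFibers_closedBall hk c hx.symm (mem_closedBall_self (by positivity))

variable [MeasurableSpace (ι → ℤ_[p])] [BorelSpace (ι → ℤ_[p])] {μ : Measure (ι → ℤ_[p])}
  [μ.IsAddLeftInvariant] [IsProbabilityMeasure μ]

theorem measure_closedBall_padic (y : ι → ℤ_[p]) (m : ℕ) :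
    μ (closedBall y ((p : ℝ)⁻¹ ^ m)) = ((p : ℝ≥0∞)⁻¹ ^ m) ^ Fintype.card ι := by
  classical
  have hcard := card_mul_measure_fiber (μ := μ)
    (f := (padicResidue p fun _ : ι ↦ m).toAddMonoidHom) (padicResidue_surjective _)
    (fun g ↦ (isLocallyConstant_padicResidue (p := p) _ {g}).measurableSet) y
  have hcell : (padicResidue p fun _ : ι ↦ m).toAddMonoidHom ⁻¹'
      {(padicResidue p fun _ : ι ↦ m).toAddMonoidHom y} = closedBall y ((p : ℝ)⁻¹ ^ m) :=
    padicResidue_fiber_const m y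
  rw [hcell, measure_univ, Fintype.card_fun, ZMod.card, mul_comm] at hcard
  rw [ENNReal.eq_inv_of_mul_eq_one_left hcard]
  push_cast
  rw [ENNReal.inv_pow, ENNReal.inv_pow]

theorem exists_forall_mem_padicFarFromRationals_forall_notMem_closedBall [Nonempty ι]
    {k : ℕ → ι → ℕ} {T : ℕ → ℕ} {τ : ℕ} {Θ : ℝ≥0∞} (hτ : 1 ≤ τ)
    (hk : ∀ n i, k n i + τ ≤ k (n + 1) i)
    (hT : ∀ n, (Fintype.card ι + 1).factorial * T n ^ (Fintype.card ι + 1) < p ^ ∑ i, k n i)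
    (hΘ : 1 + Θ * ((p : ℝ≥0∞) ^ τ)⁻¹ ≤ Θ) (hΘ' : Θ ≠ ⊤) {c : ι → ℤ_[p]}
    {y : ℕ → ι → ℤ_[p]} {m : ℕ → ℕ}
    (hcost : ∑' j, Θ ^ m j * ((p : ℝ≥0∞)⁻¹ ^ m j) ^ Fintype.card ι <
      μ (padicResidue p (k 0) ⁻¹' {padicResidue p (k 0) c})) :
    ∃ x, padicResidue p (k 0) x = padicResidue p (k 0) c ∧
      (∀ n, x ∈ padicFarFromRationals p (T n) (k (n + 1))) ∧
      ∀ j, x ∉ closedBall (y j) ((p : ℝ)⁻¹ ^ m j) := by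
  have hmono (i : ι) : StrictMono fun n ↦ k n i :=
    strictMono_nat_of_lt_succ fun n ↦ (Nat.lt_add_of_pos_right hτ).trans_le (hk n i)
  refine (isPartitionTower_padicResidue fun _ _ h i ↦ (hmono i).monotone h)
    |>.exists_forall_mem_forall_notMem (μ := μ) (Θ := Θ)
    (fun j ↦ isUnionOfFibers_closedBall (fun i ↦ (hmono i).le_apply) (y j))
    (fun n ↦ isUnionOfFibers_padicFarFromRationals) (fun n c ↦ ?_) ?_
  · exact measure_le_mul_measure_inter (pow_ne_zero _ (Nat.cast_ne_zero.2 hp.1.ne_zero))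
      (ENNReal.pow_ne_top (ENNReal.natCast_ne_top p)) hΘ hΘ' (measure_ne_top _ _)
      (pow_mul_measure_diff_padicFarFromRationals_le (hT n) (hk n) c)
  · simpa only [measure_closedBall_padic] using hcost

theorem hausdorffMeasure_iInter_padicFarFromRationals_ne_zero [Nonempty ι]
    {k : ℕ → ι → ℕ} {T : ℕ → ℕ} {τ : ℕ} {s : ℝ} (hs : 0 < s) (hτ : 1 ≤ τ)
    (hk : ∀ n i, k n i + τ ≤ k (n + 1) i)
    (hT : ∀ n, (Fintype.card ι + 1).factorial * T n ^ (Fintype.card ι + 1) < p ^ ∑ i, k n i)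
    (hsτ : 1 + (p : ℝ≥0∞) ^ (Fintype.card ι - s) * ((p : ℝ≥0∞) ^ τ)⁻¹ ≤ p ^ (Fintype.card ι - s))
    (c : ι → ℤ_[p]) :
    μH[s] ((⋂ n, padicFarFromRationals p (T n) (k (n + 1))) ∩
      padicResidue p (k 0) ⁻¹' {padicResidue p (k 0) c}) ≠ 0 := by
  have hp₀ : (p : ℝ≥0∞) ≠ 0 := Nat.cast_ne_zero.2 hp.1.ne_zero
  have hp₁ : 1 < (p : ℝ) := Nat.one_lt_cast.2 hp.1.one_lt
  let μ : Measure (ι → ℤ_[p]) := Measure.addHaarMeasure ⊤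
  have : IsProbabilityMeasure μ := ⟨Measure.addHaarMeasure_self⟩
  have hcell : μ (padicResidue p (k 0) ⁻¹' {padicResidue p (k 0) c}) ≠ 0 :=
    ((isLocallyConstant_padicResidue (k 0)).isOpen_fiber _).measure_ne_zero μ ⟨c, rfl⟩
  refine hausdorffMeasure_ne_zero_of_forall_exists_notMem_closedBall
    (inv_pos.2 (one_pos.trans hp₁)) (inv_lt_one_of_one_lt₀ hp₁) hs hcell fun y m hcost ↦ ?_
  obtain ⟨x, hxc, hfar, hx⟩ :=
    exists_forall_mem_padicFarFromRationals_forall_notMem_closedBall (μ := μ) (y := y) hτ hk hT hsτ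
      (ENNReal.rpow_ne_top_of_ne_zero hp₀ (ENNReal.natCast_ne_top p)) (m := m) (by
        simpa only [rpow_sub_pow_mul_inv_pow_pow hp₀ (ENNReal.natCast_ne_top p),
          ofReal_natCast_inv_pow hp.1.pos] using hcost)
  exact ⟨x, ⟨mem_iInter.2 hfar, hxc⟩, hx⟩

theorem hausdorffMeasure_weightedBad_inter_ne_zero [Nonempty ι] {r : ι → ℝ} (hr : ∀ i, -1 < r i)
    (hsum : 1 ≤ ∑ i, r i) {s : ℝ} (hs : 0 < s) (hs' : s < Fintype.card ι) {U : Set (ι → ℤ_[p])}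
    (hU : IsOpen U) (hUne : U.Nonempty) : μH[s] (weightedBad p r ∩ U) ≠ 0 := by
  obtain ⟨c, hc⟩ := hUne
  set σ : ι → ℝ := fun i ↦ 1 + r i
  have hσ (i) : 0 < σ i := by linarith [hr i]
  have hσsum : Fintype.card ι + 1 ≤ ∑ i, σ i := by
    simpa [σ, Finset.sum_add_distrib] using hsum
  have hp₁ : 1 < (p : ℝ≥0∞) := Nat.one_lt_cast.2 hp.1.one_lt
  obtain ⟨τ, hτ, hsτ⟩ := exists_one_add_mul_inv_pow_le hp₁
    (ENNReal.one_lt_rpow hp₁ (sub_pos.2 hs')) (ENNReal.rpow_ne_top_of_ne_zero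
      (one_pos.trans hp₁).ne' (ENNReal.natCast_ne_top p))
  obtain ⟨t, ht⟩ := (eventually_forall_le_mul_natCast hσ τ).exists
  obtain ⟨m, hm⟩ := exists_padicResidue_fiber_subset hU hc
  have hfact : ∀ᶠ C in atTop, (Fintype.card ι + 1).factorial < p ^ ((Fintype.card ι + 1) * C) :=
    ((tendsto_pow_atTop_atTop_of_one_lt hp.1.one_lt).comp
      (tendsto_id.const_mul_atTop' (Nat.succ_pos _))).eventually_gt_atTop _
  obtain ⟨C, hCm, hC⟩ := ((eventually_forall_le_mul_natCast hσ m).and hfact).exists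
  have hk (n i) :
      weightedExponent σ (t * n + C) i + τ ≤ weightedExponent σ (t * (n + 1) + C) i := by
    convert weightedExponent_add_le (hσ i).le (ht i) (t * n + C) using 2
    ring
  have ht₁ (i) : 1 ≤ σ i * t := (Nat.one_le_cast.2 hτ).trans (ht i)
  have hm₀ (i) : m ≤ weightedExponent σ (t * 0 + C) i := by
    rw [mul_zero, zero_add]
    exact_mod_cast (hCm i).trans (Nat.le_ceil _)
  have hsub : (⋂ n, padicFarFromRationals p (p ^ (t * n)) (weightedExponent σ (t * (n + 1) + C))) ∩
      padicResidue p (weightedExponent σ (t * 0 + C)) ⁻¹' {padicResidue p _ c} ⊆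
        weightedBad p r ∩ U :=
    inter_subset_inter (fun x hx ↦ mem_weightedBad_of_forall_mem_padicFarFromRationals
      (fun i ↦ (hσ i).le) ht₁ (mem_iInter.1 hx)) (hm _ hm₀)
  exact fun hzero ↦ hausdorffMeasure_iInter_padicFarFromRationals_ne_zero hs hτ hk
    (fun n ↦ factorial_mul_pow_lt_pow_sum_weightedExponent hp.1.pos hσsum hC) hsτ c
    (measure_mono_null hsub hzero)

end Dimension

theorem preimage_piFinTwo_eq_weightedBad (p : ℕ) [Fact p.Prime] (r₁ r₂ : ℝ) :
    IsometryEquiv.piFinTwo (fun _ ↦ ℤ_[p]) ⁻¹' {x : ℤ_[p] × ℤ_[p] | ∃ c : ℝ, 0 < c ∧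
        ∀ z₁ z₂ : ℤ, ∀ q : ℕ, 1 ≤ q →
          ((c / max (max |(z₁ : ℝ)| |(z₂ : ℝ)|) (q : ℝ)) ^ (1 + r₁) ≤
              ‖(x.1 : ℚ_[p]) - (z₁ : ℚ_[p]) / (q : ℚ_[p])‖ ∨
            (c / max (max |(z₁ : ℝ)| |(z₂ : ℝ)|) (q : ℝ)) ^ (1 + r₂) ≤
              ‖(x.2 : ℚ_[p]) - (z₂ : ℚ_[p]) / (q : ℚ_[p])‖)} =
      weightedBad p ![r₁, r₂] := by
  have hnorm (z : Fin 2 → ℤ) : ‖z‖ = max |(z 0 : ℝ)| |(z 1 : ℝ)| := by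
    rw [Pi.norm_def, Fin.univ_succ]
    simp [Int.norm_eq_abs]
  ext x
  simp [weightedBad, hnorm, Fin.forall_fin_succ_pi, Fin.exists_fin_two]

theorem stmt14_general (p : ℕ) [Fact p.Prime] {ι : Type*} [Fintype ι] {r : ι → ℝ}
    (hr : ∀ i, -1 < r i) (hsum : 1 ≤ ∑ i, r i) {U : Set (ι → ℤ_[p])} (hU : IsOpen U)
    (hUne : U.Nonempty) : dimH (weightedBad p r ∩ U) = Fintype.card ι := by
  borelize (ι → ℤ_[p])
  have : Nonempty ι := by
    by_contra! hι
    rw [Finset.univ_eq_empty, Finset.sum_empty] at hsum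
    linarith
  refine le_antisymm ((dimH_mono (subset_univ _)).trans dimH_univ_padic_le)
    (ENNReal.le_of_forall_nnreal_lt fun s hs ↦ ?_)
  rcases eq_or_ne s 0 with rfl | hs₀
  · exact zero_le
  · exact le_dimH_of_hausdorffMeasure_ne_zero (hausdorffMeasure_weightedBad_inter_ne_zero hr hsum
      (NNReal.coe_pos.2 (pos_iff_ne_zero.2 hs₀)) (by exact_mod_cast hs) hU hUne)

/-- The set of `r̄`-badly approximable vectors in `ℤ_p²` is
thick: its intersection with every nonempty open subset of `ℤ_p²` has Hausdorff
dimension 2. -/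
theorem stmt14 (p : ℕ) [Fact p.Prime]
    (r₁ r₂ : ℝ) (hr₁ : 0 ≤ r₁) (hr₂ : 0 ≤ r₂) (hsum : r₁ + r₂ = 1)
    (U : Set (ℤ_[p] × ℤ_[p])) (hU : IsOpen U) (hUne : U.Nonempty) :
    dimH ({x : ℤ_[p] × ℤ_[p] | ∃ c : ℝ, 0 < c ∧
        ∀ z₁ z₂ : ℤ, ∀ q : ℕ, 1 ≤ q →
          ((c / max (max |(z₁ : ℝ)| |(z₂ : ℝ)|) (q : ℝ)) ^ (1 + r₁) ≤
              ‖(x.1 : ℚ_[p]) - (z₁ : ℚ_[p]) / (q : ℚ_[p])‖ ∨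
            (c / max (max |(z₁ : ℝ)| |(z₂ : ℝ)|) (q : ℝ)) ^ (1 + r₂) ≤
              ‖(x.2 : ℚ_[p]) - (z₂ : ℚ_[p]) / (q : ℚ_[p])‖)} ∩ U)
      = (2 : ENNReal) := by
  let e := IsometryEquiv.piFinTwo fun _ ↦ ℤ_[p]
  rw [← e.dimH_preimage, preimage_inter, preimage_piFinTwo_eq_weightedBad]
  simpa using stmt14_general p (r := ![r₁, r₂])
    (Fin.forall_fin_two.2 ⟨neg_one_lt_zero.trans_le hr₁, neg_one_lt_zero.trans_le hr₂⟩)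
    (by simp [hsum]) (hU.preimage e.continuous) (hUne.preimage e.surjective)
end

section
/- Let n ≥ 1, let (M_k)_{k ∈ ℕ} be a sequence of matrices M_k ∈ GL(n, ℝ) with operator norms t_k = ‖M_k‖, and let (Z_k)_{k ∈ ℕ} be a sequence of nonempty τ_k-separated subsets of ℝⁿ (τ_k > 0). Assume that the set { log(t_k/τ_k) : k ∈ ℕ } is discrete and bounded below, and that there exists δ̄ < 1 such that for all t ∈ ℝ and all b > 0, the cardinality of { k ∈ ℕ : t − b < log(t_k/τ_k) ≤ t } is at most e^{δ̄ b}. Define E = { x ∈ ℝⁿ : ∃ c > 0 such that dist(M_k x, Z_k) ≥ c τ_k for all k ∈ ℕ }. Then for every nonempty open set U ⊆ ℝⁿ, the Hausdorff dimension of E ∩ U equals n. -/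
open Metric Set

/-!
Let `n` be the dimension. Inside a ball of radius `A * m * ρ`, where `A` depends only on the space,
put a grid of `(2 * m) ^ n` balls of radius `ρ`, with steps along a basis that are large compared
with `ρ`. Call `k` active at the stage `j` where `‖M k‖ / τ k` is comparable to `R ^ j`,
`R = A * m`. Since the points of `Z k` are `τ k`-separated, at most one of them is then close to the
image of the ball, so the points `y` of the ball for which `M k y` is too close to `Z k` form a
neighbourhood of a single fibre of `M k`. Such a set is thin in the direction of a basis vector that
`M k` stretches most: it meets at most one grid ball on each line in that direction, hence at most
`(2 * m) ^ (n - 1)` of them. By the counting hypothesis at most `m₀ + R ^ δ` indices are active at a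
stage, with `m₀` independent of `m`, and this is at most `m` for large `m` because `δ < 1`. So at
least `m ^ n` grid balls survive, and iterating yields a Cantor set of dimension at least
`log (m ^ n) / log (A * m)`, which tends to `n` as `m → ∞`.
-/

section HausdorffDimension

theorem dimH_range_le_of_edist_le {α X Y : Type*} [EMetricSpace X] [EMetricSpace Y] {f : α → Y}
    {φ : α → X} {C r : NNReal} (hr : 0 < r)
    (h : ∀ a b, edist (f a) (f b) ≤ C * edist (φ a) (φ b) ^ (r : ℝ)) :
    dimH (range f) ≤ dimH (range φ) / r := by
  rcases isEmpty_or_nonempty α with _ | ⟨⟨a₀⟩⟩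
  · simp only [range_eq_empty, dimH_empty, zero_le]
  have hfac : f.FactorsThrough φ := fun a b hab => by
    simpa [hab, ENNReal.zero_rpow_of_pos (NNReal.coe_pos.2 hr)] using h a b
  obtain ⟨g, rfl⟩ : ∃ g : X → Y, f = g ∘ φ :=
    have : Nonempty Y := ⟨f a₀⟩
    (Function.factorsThrough_iff f).1 hfac
  have hg : HolderOnWith C r g (range φ) := by
    rintro _ ⟨a, rfl⟩ _ ⟨b, rfl⟩
    exact h a b
  simpa only [range_comp] using hg.dimH_image_le hr

theorem le_dimH_range_of_le_dist {X : Type*} [MetricSpace X] {R r : ℝ} (hR : 1 < R) (hr : 0 < r)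
    {P : ℕ} {s : NNReal} (hs : 0 < s) (hP : R ^ (s : ℝ) ≤ P) {φ : (ℕ → Fin P) → X}
    (hφ : ∀ ω ω', ω ≠ ω' → r / R ^ (PiNat.firstDiff ω ω' + 1) ≤ dist (φ ω) (φ ω')) :
    (s : ENNReal) ≤ dimH (range φ) := by
  have hR₀ : 0 < R := one_pos.trans hR
  have hP₁ : 1 < P := by exact_mod_cast (Real.one_lt_rpow hR hs).trans_le hP
  have holder : ∀ ω ω', dist (Real.ofDigits ω) (Real.ofDigits ω') ≤
      (R / r) ^ (s : ℝ) * dist (φ ω) (φ ω') ^ (s : ℝ) := fun ω ω' => by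
    rcases eq_or_ne ω ω' with rfl | hne
    · simp [hs.ne']
    set j := PiNat.firstDiff ω ω'
    have hdist : (R ^ j)⁻¹ ≤ R / r * dist (φ ω) (φ ω') := by
      calc (R ^ j)⁻¹ = R / r * (r / R ^ (j + 1)) := by field_simp; ring
        _ ≤ R / r * dist (φ ω) (φ ω') := by gcongr; exact hφ ω ω' hne
    calc dist (Real.ofDigits ω) (Real.ofDigits ω') ≤ ((P : ℝ) ^ j)⁻¹ :=
          Real.abs_ofDigits_sub_ofDigits_le fun _ hi => PiNat.apply_eq_of_lt_firstDiff hi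
      _ ≤ ((R ^ (s : ℝ)) ^ j)⁻¹ := by gcongr
      _ = (R ^ j)⁻¹ ^ (s : ℝ) := by rw [Real.inv_rpow (by positivity), Real.rpow_pow_comm hR₀.le]
      _ ≤ (R / r * dist (φ ω) (φ ω')) ^ (s : ℝ) := by gcongr
      _ = _ := Real.mul_rpow (by positivity) dist_nonneg
  have hdigits : 1 ≤ dimH (range (Real.ofDigits (b := P))) := by
    have hsub : Icc (0 : ℝ) 1 ⊆ range (Real.ofDigits (b := P)) := fun y hy =>
      let ⟨ω, _, hω⟩ := Real.ofDigits_SurjOn hP₁ hy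
      ⟨ω, hω⟩
    have hIcc : dimH (Icc (0 : ℝ) 1) = 1 := by
      rw [Real.dimH_of_nonempty_interior (by simp)]
      simp
    exact hIcc.ge.trans (dimH_mono hsub)
  have hle := hdigits.trans <| dimH_range_le_of_edist_le (φ := φ)
    (C := ((R / r) ^ (s : ℝ)).toNNReal) hs fun ω ω' => by
      rw [edist_dist, edist_dist, ENNReal.ofReal_rpow_of_nonneg dist_nonneg s.coe_nonneg,
        ← ENNReal.ofReal, ← ENNReal.ofReal_mul (by positivity)]
      exact ENNReal.ofReal_le_ofReal (holder ω ω')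
  rwa [ENNReal.le_div_iff_mul_le (by simp [hs.ne']) (by simp), one_mul] at hle

/-- The point reached from the root `x₀` of a tree of points along a finite branch, where `F j x`
lists the children of a point `x` at depth `j`. As in `PiNat.res`, the last step of the branch is
the head of the list. -/
def treeCenter {X β : Type*} (F : ℕ → X → β → X) (x₀ : X) : List β → X
  | [] => x₀
  | b :: l => F l.length (treeCenter F x₀ l) b

theorem exists_forall_mem_closedBall_treeCenter {X β : Type*} [PseudoMetricSpace X]
    [CompleteSpace X] {R r : ℝ} (hR : 1 < R) (hr : 0 < r) {F : ℕ → X → β → X}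
    (hF : ∀ j x b, closedBall (F j x b) (r / R ^ (j + 1)) ⊆ closedBall x (r / R ^ j)) (x₀ : X) :
    ∃ φ : (ℕ → β) → X, ∀ ω j, φ ω ∈ closedBall (treeCenter F x₀ (PiNat.res ω j)) (r / R ^ j) := by
  have : 0 < R := one_pos.trans hR
  let A : List β → Set X := fun l => closedBall (treeCenter F x₀ l) (r / R ^ l.length)
  have hanti : CantorScheme.ClosureAntitone A :=
    CantorScheme.Antitone.closureAntitone (fun l b => hF l.length _ b) fun l => isClosed_closedBall
  have hradius : Filter.Tendsto (fun j : ℕ => ENNReal.ofReal (2 * (r / R ^ j))) Filter.atTop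
      (nhds 0) := by
    have hinv := tendsto_inv_atTop_zero.comp (tendsto_pow_atTop_atTop_of_one_lt hR)
    simpa [div_eq_mul_inv] using ENNReal.tendsto_ofReal ((hinv.const_mul r).const_mul 2)
  have hdiam : CantorScheme.VanishingDiam A := fun ω =>
    tendsto_of_tendsto_of_tendsto_of_le_of_le tendsto_const_nhds hradius (fun _ => zero_le)
      fun j => ediam_le_of_forall_dist_le fun x hx y hy => by
        simp only [A, PiNat.res_length, mem_closedBall] at hx hy
        linarith [dist_triangle_right x y (treeCenter F x₀ (PiNat.res ω j))]
  have hdom := hanti.map_of_vanishingDiam hdiam fun l => nonempty_closedBall.2 (by positivity)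
  refine ⟨fun ω => (CantorScheme.inducedMap A).2 ⟨ω, hdom ▸ mem_univ ω⟩, fun ω j => ?_⟩
  simpa only [A, PiNat.res_length] using
    CantorScheme.map_mem (A := A) ⟨ω, hdom ▸ mem_univ ω⟩ j

theorem le_dimH_of_separated_subdivision {X : Type*} [MetricSpace X] [CompleteSpace X] {R r : ℝ}
    (hR : 1 < R) (hr : 0 < r) {P : ℕ} {s : NNReal} (hs : 0 < s) (hP : R ^ (s : ℝ) ≤ P)
    {S : ℕ → Set X} (x₀ : X)
    (h : ∀ j x, ∃ f : Fin P → X,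
      (∀ i, closedBall (f i) (r / R ^ (j + 1)) ⊆ closedBall x (r / R ^ j) ∩ S j) ∧
      Pairwise fun i i' => 3 * (r / R ^ (j + 1)) ≤ dist (f i) (f i')) :
    (s : ENNReal) ≤ dimH ((⋂ j, S j) ∩ closedBall x₀ r) := by
  choose F hF hsep using h
  obtain ⟨φ, hφ⟩ := exists_forall_mem_closedBall_treeCenter hR hr
    (fun j x b => (hF j x b).trans inter_subset_left) x₀
  have hlimit : range φ ⊆ (⋂ j, S j) ∩ closedBall x₀ r := range_subset_iff.2 fun ω => by
    refine ⟨mem_iInter.2 fun j => ?_, by simpa [treeCenter] using hφ ω 0⟩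
    have hmem := hφ ω (j + 1)
    simp only [PiNat.res_succ, treeCenter, PiNat.res_length] at hmem
    exact (hF j _ _ hmem).2
  refine (le_dimH_range_of_le_dist hR hr hs hP fun ω ω' hne => ?_).trans (dimH_mono hlimit)
  set j := PiNat.firstDiff ω ω'
  have hres : PiNat.res ω j = PiNat.res ω' j :=
    PiNat.res_eq_res.2 fun _ hi => PiNat.apply_eq_of_lt_firstDiff hi
  set y := F j (treeCenter F x₀ (PiNat.res ω j)) (ω j)
  set y' := F j (treeCenter F x₀ (PiNat.res ω j)) (ω' j)
  have hcenters : 3 * (r / R ^ (j + 1)) ≤ dist y y' := hsep j _ (PiNat.apply_firstDiff_ne hne)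
  have hω : dist (φ ω) y ≤ r / R ^ (j + 1) := by
    simpa only [PiNat.res_succ, treeCenter, PiNat.res_length] using! hφ ω (j + 1)
  have hω' : dist (φ ω') y' ≤ r / R ^ (j + 1) := by
    simpa only [PiNat.res_succ, treeCenter, PiNat.res_length, ← hres] using! hφ ω' (j + 1)
  linarith [dist_triangle4 y (φ ω) (φ ω') y', dist_comm y (φ ω)]

end HausdorffDimension

section FiniteChoice

open Finset

theorem card_le_pow_of_injOn_off_coord {ι α : Type*} [Fintype ι] [Fintype α]
    (l : ι) {s : Finset (ι → α)} (h : ∀ f ∈ s, ∀ g ∈ s, (∀ j ≠ l, f j = g j) → f = g) :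
    #s ≤ Fintype.card α ^ (Fintype.card ι - 1) := by
  classical
  calc #s ≤ #(univ : Finset ({j // j ≠ l} → α)) :=
        card_le_card_of_injOn (fun f j => f j) (fun _ _ => mem_coe.2 (mem_univ _))
          fun f hf g hg hfg => h f hf g hg fun j hj => congrFun hfg ⟨j, hj⟩
    _ = Fintype.card α ^ (Fintype.card ι - 1) := by simp

theorem exists_embedding_forall_notMem {κ α : Type*} [Fintype α] {W : Finset κ}
    {bad : κ → Finset α} {P m q : ℕ} (hW : #W ≤ m) (hbad : ∀ k ∈ W, #(bad k) ≤ q)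
    (hcard : P + m * q ≤ Fintype.card α) :
    ∃ f : Fin P ↪ α, ∀ i, ∀ k ∈ W, f i ∉ bad k := by
  classical
  have hunion : #(W.biUnion bad) ≤ m * q :=
    (card_biUnion_le_card_mul _ _ _ hbad).trans (Nat.mul_le_mul_right _ hW)
  have hgood : P ≤ #(W.biUnion bad)ᶜ := by
    rw [card_compl]
    omega
  obtain ⟨T, hT, rfl⟩ := exists_subset_card_eq hgood
  refine ⟨T.equivFin.symm.toEmbedding.trans (Function.Embedding.subtype _), fun i k hk hmem => ?_⟩
  exact mem_compl.1 (hT (T.equivFin.symm i).2) (mem_biUnion.2 ⟨k, hk, hmem⟩)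

end FiniteChoice

section Grid

open Module

variable {ι E F : Type*} [Fintype ι] [NormedAddCommGroup E] [NormedSpace ℝ E]
  [NormedAddCommGroup F] [NormedSpace ℝ F]

/-- The point with digits `i` in the grid of `N ^ |ι|` points with corner `x` and steps `d • b j`;
the candidate centers for the children of a ball. -/
noncomputable def gridPoint (b : Basis ι ℝ E) (x : E) (d : ℝ) {N : ℕ} (i : ι → Fin N) : E :=
  x + d • ∑ j, (i j : ℝ) • b j

variable {b : Basis ι ℝ E} {x : E} {d : ℝ} {N : ℕ}

theorem one_le_abs_fin_coe_sub_coe {p q : Fin N} (h : p ≠ q) : 1 ≤ |(p : ℝ) - q| := by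
  have hne : ((p : ℕ) : ℤ) - (q : ℕ) ≠ 0 :=
    sub_ne_zero.2 (Nat.cast_injective.ne (Fin.val_ne_of_ne h))
  exact_mod_cast Int.one_le_abs hne

theorem dist_gridPoint_self_le (hd : 0 ≤ d) (i : ι → Fin N) :
    dist (gridPoint b x d i) x ≤ d * (N * ∑ j, ‖b j‖) := by
  rw [gridPoint, dist_self_add_left, norm_smul, Real.norm_of_nonneg hd, Finset.mul_sum]
  gcongr
  refine norm_sum_le_of_le _ fun j _ => ?_
  rw [norm_smul, Real.norm_natCast]
  gcongr
  exact (i j).2.le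

theorem gridPoint_sub_gridPoint (i i' : ι → Fin N) :
    gridPoint b x d i - gridPoint b x d i' = ∑ j, (d * ((i j : ℝ) - i' j)) • b j := by
  simp only [gridPoint, add_sub_add_left_eq_sub, Finset.smul_sum, smul_smul,
    ← Finset.sum_sub_distrib, ← sub_smul, mul_sub]

theorem le_mul_dist_gridPoint (hd : 0 ≤ d) {i i' : ι → Fin N}
    (h : i ≠ i') :
    d ≤ ‖b.equivFunL.toContinuousLinearMap‖ * dist (gridPoint b x d i) (gridPoint b x d i') := by
  obtain ⟨j, hj⟩ := Function.ne_iff.1 h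
  calc d ≤ |d * ((i j : ℝ) - i' j)| := by
        rw [abs_mul, abs_of_nonneg hd]
        exact le_mul_of_one_le_right hd (one_le_abs_fin_coe_sub_coe hj)
    _ = ‖b.equivFunL (gridPoint b x d i - gridPoint b x d i') j‖ := by
        rw [gridPoint_sub_gridPoint, b.equivFunL_apply, b.repr_sum_self,
          Real.norm_eq_abs]
    _ ≤ ‖b.equivFunL (gridPoint b x d i - gridPoint b x d i')‖ := norm_le_pi_norm _ j
    _ ≤ _ := by
        rw [dist_eq_norm]
        exact b.equivFunL.toContinuousLinearMap.le_opNorm _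

theorem mul_norm_le_dist_map_gridPoint (hd : 0 ≤ d) (M : E →L[ℝ] F) {i i' : ι → Fin N} {l : ι}
    (hl : i l ≠ i' l) (hoff : ∀ j ≠ l, i j = i' j) :
    d * ‖M (b l)‖ ≤ dist (M (gridPoint b x d i)) (M (gridPoint b x d i')) := by
  rw [dist_eq_norm, ← map_sub, gridPoint_sub_gridPoint,
    Finset.sum_eq_single_of_mem l (Finset.mem_univ l) fun j _ hj => by simp [hoff j hj],
    map_smul, norm_smul, Real.norm_eq_abs, abs_mul, abs_of_nonneg hd]
  gcongr
  exact le_mul_of_one_le_right hd (one_le_abs_fin_coe_sub_coe hl)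

open Classical in
theorem card_gridPoint_not_disjoint_le {M : E →L[ℝ] F} {B : Set E} {ρ : ℝ} (hd : 0 ≤ d)
    (hB : ∀ y ∈ B, ∀ y' ∈ B, dist (M y) (M y') ≤ ‖M‖ * ρ) {l : ι}
    (hl : 3 * (‖M‖ * ρ) < d * ‖M (b l)‖) :
    (Finset.univ.filter fun i : ι → Fin N =>
      ¬ Disjoint (closedBall (gridPoint b x d i) ρ) B).card ≤ N ^ (Fintype.card ι - 1) := by
  refine (card_le_pow_of_injOn_off_coord l fun i hi i' hi' hoff => ?_).trans_eq
    (by rw [Fintype.card_fin])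
  by_contra hne
  have hne_l : i l ≠ i' l := fun h => hne <| funext fun j =>
    (eq_or_ne j l).elim (fun hj => hj ▸ h) (hoff j)
  simp only [Finset.mem_filter_univ, not_disjoint_iff] at hi hi'
  obtain ⟨y, hy, hyB⟩ := hi
  obtain ⟨y', hy', hyB'⟩ := hi'
  have hM : ∀ {u v : E}, dist u v ≤ ρ → dist (M u) (M v) ≤ ‖M‖ * ρ := fun huv =>
    (M.lipschitz.dist_le_mul _ _).trans (by gcongr; rfl)
  have hfar := mul_norm_le_dist_map_gridPoint (b := b) (x := x) hd M hne_l hoff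
  have htri := dist_triangle4 (M (gridPoint b x d i)) (M y) (M y') (M (gridPoint b x d i'))
  linarith [hM (mem_closedBall'.1 hy), hB y hyB y' hyB', hM (mem_closedBall.1 hy')]

theorem exists_opNorm_le_mul_norm_apply_basis {ι : Type*} [Finite ι] [Nonempty ι]
    (b : Basis ι ℝ E) : ∃ C > 0, ∀ M : E →L[ℝ] F, ∃ l, ‖M‖ ≤ C * ‖M (b l)‖ := by
  obtain ⟨C, hC, hle⟩ := b.exists_opNorm_le (F := F)
  refine ⟨C, hC, fun M => ?_⟩
  obtain ⟨l, hl⟩ := Finite.exists_max fun l => ‖M (b l)‖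
  exact ⟨l, hle (norm_nonneg _) hl⟩

theorem pow_add_mul_two_mul_pow_le (m n : ℕ) :
    m ^ (n + 1) + m * (2 * m) ^ n ≤ (2 * m) ^ (n + 1) := by
  have hpow : m ^ n ≤ (2 * m) ^ n := Nat.pow_le_pow_left (Nat.le_mul_of_pos_left m two_pos) n
  calc m ^ (n + 1) + m * (2 * m) ^ n = m * m ^ n + m * (2 * m) ^ n := by ring
    _ ≤ m * (2 * m) ^ n + m * (2 * m) ^ n := by gcongr
    _ = (2 * m) ^ (n + 1) := by ring

theorem exists_separated_balls_disjoint {κ : Type*} [FiniteDimensional ℝ E] [Nontrivial E] :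
    ∃ A : ℝ, 0 < A ∧ ∀ {m : ℕ} {W : Finset κ} {M : κ → E →L[ℝ] F} {B : κ → Set E} {ρ : ℝ},
      0 < m → W.card ≤ m → 0 < ρ → (∀ k ∈ W, M k ≠ 0) →
      (∀ k ∈ W, ∀ y ∈ B k, ∀ y' ∈ B k, dist (M k y) (M k y') ≤ ‖M k‖ * ρ) → ∀ x : E,
      ∃ f : Fin (m ^ finrank ℝ E) → E,
        (∀ i, closedBall (f i) ρ ⊆ closedBall x (A * m * ρ)) ∧
        (∀ i, ∀ k ∈ W, Disjoint (closedBall (f i) ρ) (B k)) ∧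
        Pairwise fun i i' => 3 * ρ ≤ dist (f i) (f i') := by
  classical
  let b := finBasis ℝ E
  obtain ⟨n, hn⟩ := Nat.exists_eq_succ_of_ne_zero (finrank_pos (R := ℝ) (M := E)).ne'
  have : Nonempty (Fin (finrank ℝ E)) := ⟨⟨0, finrank_pos⟩⟩
  obtain ⟨C, hC, hl⟩ := exists_opNorm_le_mul_norm_apply_basis (F := F) b
  set K := ‖b.equivFunL.toContinuousLinearMap‖
  refine ⟨8 * (C + K) * ∑ j, ‖b j‖ + 1, by positivity, fun {m W M B ρ} hm hW hρ hM hB x => ?_⟩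
  choose l hl using fun k => hl (M k)
  have hm₁ : (1 : ℝ) ≤ m := by exact_mod_cast hm
  set d := 4 * (C + K) * ρ with hd
  have hd₀ : 0 < d := by positivity
  have hstep : ∀ k ∈ W, 3 * (‖M k‖ * ρ) < d * ‖M k (b (l k))‖ := fun k hk => by
    have hMk : 0 < ‖M k‖ * ρ := mul_pos (norm_pos_iff.2 (hM k hk)) hρ
    calc 3 * (‖M k‖ * ρ) < 4 * (‖M k‖ * ρ) := by linarith
      _ ≤ 4 * ((C + K) * ‖M k (b (l k))‖ * ρ) := by
          gcongr
          exact (hl k).trans (by gcongr; exact le_add_of_nonneg_right (norm_nonneg _))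
      _ = d * ‖M k (b (l k))‖ := by rw [hd]; ring
  have hcard : m ^ finrank ℝ E + m * (2 * m) ^ (Fintype.card (Fin (finrank ℝ E)) - 1) ≤
      Fintype.card (Fin (finrank ℝ E) → Fin (2 * m)) := by
    simp only [Fintype.card_fun, Fintype.card_fin, hn, Nat.succ_eq_add_one, Nat.add_sub_cancel]
    exact pow_add_mul_two_mul_pow_le m n
  obtain ⟨e, he⟩ := exists_embedding_forall_notMem hW
    (fun k hk => card_gridPoint_not_disjoint_le (x := x) hd₀.le (hB k hk) (hstep k hk)) hcard
  refine ⟨fun i => gridPoint b x d (e i), fun i => closedBall_subset_closedBall' ?_,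
    fun i k hk => by simpa using he i k hk, fun i i' hii' => ?_⟩
  · calc ρ + dist (gridPoint b x d (e i)) x ≤ m * ρ + d * ((2 * m : ℕ) * ∑ j, ‖b j‖) :=
          add_le_add (le_mul_of_one_le_left hρ.le hm₁) (dist_gridPoint_self_le hd₀.le _)
      _ = (8 * (C + K) * ∑ j, ‖b j‖ + 1) * m * ρ := by rw [hd]; push_cast; ring
  · have hsep := le_mul_dist_gridPoint (b := b) (x := x) hd₀.le (e.injective.ne hii')
    have hCK : 0 < C + K := by positivity
    refine le_of_mul_le_mul_left ?_ hCK
    calc (C + K) * (3 * ρ) ≤ d := by rw [hd]; nlinarith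
      _ ≤ K * dist _ _ := hsep
      _ ≤ (C + K) * dist _ _ := by gcongr; exact le_add_of_nonneg_left hC.le

theorem dist_le_of_infDist_lt {X : Type*} [PseudoMetricSpace X] {Z : Set X} (hZ : Z.Nonempty)
    {τ ε : ℝ} (hsep : Z.Pairwise fun z z' => τ ≤ dist z z') {y y' : X}
    (hτ : dist y y' + 2 * ε ≤ τ) (hy : infDist y Z < ε) (hy' : infDist y' Z < ε) :
    dist y y' ≤ 2 * ε := by
  obtain ⟨z, hz, hyz⟩ := (infDist_lt_iff hZ).1 hy
  obtain ⟨z', hz', hyz'⟩ := (infDist_lt_iff hZ).1 hy'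
  have hzz' : z = z' := hsep.eq hz hz' <| not_le.2 <| by
    linarith [dist_triangle4 z y y' z', dist_comm z y]
  subst hzz'
  linarith [dist_triangle_right y y' z]

theorem exists_separated_balls_le_infDist {κ : Type*} [FiniteDimensional ℝ E] [Nontrivial E] :
    ∃ A : ℝ, 0 < A ∧ ∀ {m : ℕ} {W : Set κ} {M : κ → E →L[ℝ] F} {Z : κ → Set F} {τ ε : κ → ℝ}
      {ρ : ℝ}, 0 < m → W.encard ≤ m → 0 < ρ → (∀ k ∈ W, M k ≠ 0) → (∀ k ∈ W, (Z k).Nonempty) →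
      (∀ k ∈ W, (Z k).Pairwise fun z z' => τ k ≤ dist z z') →
      (∀ k ∈ W, 2 * (‖M k‖ * (A * m * ρ)) + 2 * ε k ≤ τ k) →
      (∀ k ∈ W, 2 * ε k ≤ ‖M k‖ * ρ) → ∀ x : E,
      ∃ f : Fin (m ^ finrank ℝ E) → E,
        (∀ i, closedBall (f i) ρ ⊆
          closedBall x (A * m * ρ) ∩ {y | ∀ k ∈ W, ε k ≤ infDist (M k y) (Z k)}) ∧
        Pairwise fun i i' => 3 * ρ ≤ dist (f i) (f i') := by
  obtain ⟨A, hA, hballs⟩ := exists_separated_balls_disjoint (E := E) (F := F) (κ := κ)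
  refine ⟨A, hA, fun {m W M Z τ ε ρ} hm hW hρ hM hZ hsep hupper hlower x => ?_⟩
  have hfin : W.Finite := finite_of_encard_le_coe hW
  let B : κ → Set E := fun k => closedBall x (A * m * ρ) ∩ {y | infDist (M k y) (Z k) < ε k}
  have hthin : ∀ k ∈ hfin.toFinset, ∀ y ∈ B k, ∀ y' ∈ B k,
      dist (M k y) (M k y') ≤ ‖M k‖ * ρ := by
    rintro k hk y ⟨hy, hyZ⟩ y' ⟨hy', hyZ'⟩
    have hkW := hfin.mem_toFinset.1 hk
    have himage : dist (M k y) (M k y') ≤ 2 * (‖M k‖ * (A * m * ρ)) :=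
      calc dist (M k y) (M k y') ≤ ‖M k‖ * dist y y' := (M k).lipschitz.dist_le_mul y y'
        _ ≤ ‖M k‖ * (A * m * ρ + A * m * ρ) := by
            gcongr
            exact (dist_triangle_right y y' x).trans (add_le_add hy hy')
        _ = 2 * (‖M k‖ * (A * m * ρ)) := by ring
    exact (dist_le_of_infDist_lt (hZ k hkW) (hsep k hkW) (by linarith [hupper k hkW]) hyZ
      hyZ').trans (hlower k hkW)
  have hcard : hfin.toFinset.card ≤ m := by
    rw [hfin.encard_eq_coe_toFinset_card] at hW
    exact_mod_cast hW
  obtain ⟨f, hsub, hdisj, hf⟩ :=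
    hballs hm hcard hρ (fun k hk => hM k (hfin.mem_toFinset.1 hk)) hthin x
  refine ⟨f, fun i y hy => ⟨hsub i hy, fun k hk => not_lt.1 fun hlt => ?_⟩, hf⟩
  exact disjoint_left.1 (hdisj i k (hfin.mem_toFinset.2 hk)) hy ⟨hsub i hy, hlt⟩

end Grid

section Scales

open Filter

theorem eventually_mul_rpow_le_rpow {a b : ℝ} (h : a < b) (C : ℝ) :
    ∀ᶠ x : ℝ in atTop, C * x ^ a ≤ x ^ b := by
  filter_upwards [(tendsto_rpow_atTop (sub_pos.2 h)).eventually_ge_atTop C, eventually_gt_atTop 0]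
    with x hC hx
  calc C * x ^ a ≤ x ^ (b - a) * x ^ a := by gcongr
    _ = x ^ b := by rw [← Real.rpow_add hx, sub_add_cancel]

theorem exists_nat_rpow_le_pow_and_add_rpow_le {A s δ : ℝ} {n : ℕ} (hA : 0 < A) (hs : s < n)
    (hδ : δ < 1) (m₀ : ℝ) :
    ∃ m : ℕ, 1 < A * m ∧ (A * m) ^ s ≤ (m : ℝ) ^ n ∧ m₀ + (A * m) ^ δ ≤ m := by
  have hall : ∀ᶠ x : ℝ in atTop, 1 < A * x ∧ (A * x) ^ s ≤ x ^ n ∧ m₀ + (A * x) ^ δ ≤ x := by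
    filter_upwards [eventually_gt_atTop 0, (tendsto_id.const_mul_atTop hA).eventually_gt_atTop 1,
      eventually_mul_rpow_le_rpow hs (A ^ s), eventually_mul_rpow_le_rpow hδ (2 * A ^ δ),
      eventually_ge_atTop (2 * m₀)] with x hx hAx hxs hxδ hm₀
    rw [Real.mul_rpow hA.le hx.le, Real.mul_rpow hA.le hx.le, ← Real.rpow_natCast]
    rw [Real.rpow_one] at hxδ
    exact ⟨hAx, hxs, by linarith⟩
  exact (tendsto_natCast_atTop_atTop.eventually hall).exists

variable {κ : Type*}

theorem encard_ceil_fiber_le {L : κ → ℝ} {ℓ L₀ b : ℝ} (hb : 0 < b) (hL₀ : ℓ < L₀)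
    (hℓ : ∀ k, ℓ < L k) {g : ℝ → ENNReal}
    (hg : ∀ t b, 0 < b → ({k | t - b < L k ∧ L k ≤ t}.encard : ENNReal) ≤ g b) (j : ℕ) :
    ({k | ⌈(L k - L₀) / b⌉₊ = j}.encard : ENNReal) ≤ g (L₀ - ℓ) + g b := by
  have window : ∀ {t b' : ℝ}, 0 < b' → ({k | ⌈(L k - L₀) / b⌉₊ = j} ⊆
      {k | t - b' < L k ∧ L k ≤ t}) → ({k | ⌈(L k - L₀) / b⌉₊ = j}.encard : ENNReal) ≤ g b' :=
    fun hb' hsub => le_trans (by exact_mod_cast encard_le_encard hsub) (hg _ _ hb')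
  rcases j with _ | i
  · refine (window (t := L₀) (sub_pos.2 hL₀) fun k hk => ?_).trans le_self_add
    rw [mem_ofPred_eq, Nat.ceil_eq_zero, div_le_iff₀ hb, zero_mul] at hk
    exact ⟨by linarith [hℓ k], by linarith⟩
  · refine (window (t := L₀ + (i + 1) * b) hb fun k hk => ?_).trans le_add_self
    rw [mem_ofPred_eq, Nat.ceil_eq_iff i.succ_ne_zero, lt_div_iff₀ hb, div_le_iff₀ hb] at hk
    push_cast at hk
    exact ⟨by linarith [hk.1], by linarith [hk.2]⟩

theorem le_pow_natCeil_logb {R x : ℝ} (hR : 1 < R) (hx : 0 < x) :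
    x ≤ R ^ ⌈Real.logb R x⌉₊ := by
  rw [← Real.rpow_natCast, ← Real.logb_le_iff_le_rpow hR hx]
  exact Nat.le_ceil _

theorem pow_natCeil_logb_le {R x : ℝ} (hR : 1 < R) (hx : 0 < x) :
    R ^ ⌈Real.logb R x⌉₊ ≤ R * max 1 x := by
  rcases le_total x 1 with hx₁ | hx₁
  · rw [Nat.ceil_eq_zero.2 (Real.logb_nonpos hR hx.le hx₁), pow_zero]
    exact hR.le.trans (le_mul_of_one_le_right (one_pos.trans hR).le (le_max_left 1 x))
  · calc R ^ ⌈Real.logb R x⌉₊ ≤ R ^ (Real.logb R x + 1) := by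
          rw [← Real.rpow_natCast]
          exact Real.rpow_le_rpow_of_exponent_le hR.le
            (Nat.ceil_lt_add_one (Real.logb_nonneg hR hx₁)).le
      _ = R * max 1 x := by
          rw [Real.rpow_add_one (by positivity), Real.rpow_logb (by positivity) hR.ne' hx,
            max_eq_right hx₁, mul_comm]

theorem exists_stage {q : κ → ℝ} (hq : ∀ k, 0 < q k)
    (hbdd : BddBelow (range fun k => Real.log (q k))) {δ : ℝ}
    (hcard : ∀ t b : ℝ, 0 < b →
      ({k | t - b < Real.log (q k) ∧ Real.log (q k) ≤ t}.encard : ENNReal) ≤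
        ENNReal.ofReal (Real.exp (δ * b))) {a : ℝ} (ha : 0 < a) :
    ∃ m₀ : ℝ, ∀ R > 1, ∃ stage : κ → ℕ, ∃ c > 0,
      (∀ j, ({k | stage k = j}.encard : ENNReal) ≤ ENNReal.ofReal (m₀ + R ^ δ)) ∧
      ∀ k, c * R ^ stage k ≤ q k ∧ q k ≤ a * R ^ stage k := by
  obtain ⟨ℓ₀, hℓ₀⟩ := hbdd
  set ℓ := min ℓ₀ (Real.log a) - 1
  have hℓa : ℓ < Real.log a := (sub_one_lt _).trans_le (min_le_right _ _)
  have hℓq : ∀ k, ℓ < Real.log (q k) := fun k =>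
    (sub_one_lt _).trans_le ((min_le_left _ _).trans (hℓ₀ ⟨k, rfl⟩))
  refine ⟨Real.exp (δ * (Real.log a - ℓ)), fun R hR => ?_⟩
  have hR₀ : 0 < R := one_pos.trans hR
  have hqa : ∀ k, 0 < q k / a := fun k => div_pos (hq k) ha
  refine ⟨fun k => ⌈Real.logb R (q k / a)⌉₊, Real.exp ℓ / R, by positivity, fun j => ?_,
    fun k => ⟨?_, ?_⟩⟩
  · simp only [Real.logb, Real.log_div (hq _).ne' ha.ne', Real.rpow_def_of_pos hR₀,
      mul_comm (Real.log R)]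
    rw [ENNReal.ofReal_add (Real.exp_pos _).le (Real.exp_pos _).le]
    exact encard_ceil_fiber_le (Real.log_pos hR) hℓa hℓq hcard j
  · calc Real.exp ℓ / R * R ^ ⌈Real.logb R (q k / a)⌉₊
        ≤ Real.exp ℓ / R * (R * max 1 (q k / a)) := by
          gcongr
          exact pow_natCeil_logb_le hR (hqa k)
      _ = max (Real.exp ℓ) (Real.exp ℓ * (q k / a)) := by
          rw [← mul_assoc, div_mul_cancel₀ _ hR₀.ne', mul_max_of_nonneg _ _ (Real.exp_pos _).le,
            mul_one]
      _ ≤ q k := max_le ((Real.lt_log_iff_exp_lt (hq k)).1 (hℓq k)).le <| by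
          rw [mul_div_left_comm]
          exact mul_le_of_le_one_right (hq k).le
            ((div_le_one ha).2 ((Real.lt_log_iff_exp_lt ha).1 hℓa).le)
  · exact (div_le_iff₀' ha).1 (le_pow_natCeil_logb hR (hqa k))

theorem exists_stage_radius_bounds {T τ : κ → ℝ} (hT : ∀ k, 0 < T k) (hτ : ∀ k, 0 < τ k)
    (hbdd : BddBelow (range fun k => Real.log (T k / τ k))) {δ : ℝ}
    (hcard : ∀ t b : ℝ, 0 < b →
      ({k | t - b < Real.log (T k / τ k) ∧ Real.log (T k / τ k) ≤ t}.encard : ENNReal) ≤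
        ENNReal.ofReal (Real.exp (δ * b))) {r : ℝ} (hr : 0 < r) :
    ∃ m₀ : ℝ, ∀ R > 1, ∃ stage : κ → ℕ, ∃ c > 0,
      (∀ j, ({k | stage k = j}.encard : ENNReal) ≤ ENNReal.ofReal (m₀ + R ^ δ)) ∧
      ∀ k, 2 * (c * τ k) ≤ T k * (r / R ^ (stage k + 1)) ∧
        2 * (T k * (r / R ^ stage k)) + 2 * (c * τ k) ≤ τ k := by
  obtain ⟨m₀, hstage⟩ := exists_stage (fun k => div_pos (hT k) (hτ k)) hbdd hcard
    (a := 1 / (4 * r)) (by positivity)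
  refine ⟨m₀, fun R hR => ?_⟩
  have : 0 < R := one_pos.trans hR
  obtain ⟨stage, c, hc, hfiber, hq⟩ := hstage R hR
  refine ⟨stage, c * r / (2 * R), by positivity, hfiber, fun k => ?_⟩
  have hρ : 0 ≤ T k * (r / R ^ stage k) := mul_nonneg (hT k).le (by positivity)
  have hlower : 2 * (c * r / (2 * R) * τ k) ≤ T k * (r / R ^ (stage k + 1)) :=
    calc 2 * (c * r / (2 * R) * τ k) = c * R ^ stage k * τ k * (r / R ^ (stage k + 1)) := by
          field_simp
          ring
      _ ≤ T k * (r / R ^ (stage k + 1)) := by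
          gcongr
          exact (le_div_iff₀ (hτ k)).1 (hq k).1
  have hupper : 4 * (T k * (r / R ^ stage k)) ≤ τ k :=
    calc 4 * (T k * (r / R ^ stage k))
        ≤ 4 * (1 / (4 * r) * R ^ stage k * τ k * (r / R ^ stage k)) := by
          gcongr
          exact (div_le_iff₀ (hτ k)).1 (hq k).2
      _ = τ k := by field_simp
  have hshrink : T k * (r / R ^ (stage k + 1)) ≤ T k * (r / R ^ stage k) := by
    have hTk := (hT k).le
    gcongr
    exacts [hR.le, (stage k).le_succ]
  exact ⟨hlower, by linarith⟩

end Scales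

theorem bddBelow_of_finite_inter_Iic {α : Type*} [LinearOrder α] {s : Set α} {t : α}
    (h : (s ∩ Iic t).Finite) : BddBelow s := by
  have : Nonempty α := ⟨t⟩
  refine (h.bddBelow.union (bddBelow_Ici (a := t))).mono fun x hx => ?_
  exact (le_total x t).imp (fun hxt => ⟨hx, hxt⟩) id

section Thickness

open Module

variable {κ E F : Type*} [NormedAddCommGroup E] [NormedSpace ℝ E] [FiniteDimensional ℝ E]
  [NormedAddCommGroup F] [NormedSpace ℝ F]

theorem exists_pos_le_dimH_inter_closedBall {M : κ → E →L[ℝ] F} (hM : ∀ k, M k ≠ 0)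
    {τ : κ → ℝ} (hτ : ∀ k, 0 < τ k) {Z : κ → Set F} (hZne : ∀ k, (Z k).Nonempty)
    (hZsep : ∀ k, (Z k).Pairwise fun z z' => τ k ≤ dist z z')
    (hbdd : BddBelow (range fun k => Real.log (‖M k‖ / τ k))) {δ : ℝ} (hδ : δ < 1)
    (hcard : ∀ t b : ℝ, 0 < b →
      {k | t - b < Real.log (‖M k‖ / τ k) ∧ Real.log (‖M k‖ / τ k) ≤ t}.encard ≤
        ENNReal.ofReal (Real.exp (δ * b)))
    {s : NNReal} (hs : 0 < s) (hsE : (s : ℝ) < finrank ℝ E) (x₀ : E) {r : ℝ} (hr : 0 < r) :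
    ∃ c > 0, (s : ENNReal) ≤
      dimH ({x | ∀ k, c * τ k ≤ infDist (M k x) (Z k)} ∩ closedBall x₀ r) := by
  have : Nontrivial E := finrank_pos_iff.1 (by exact_mod_cast (NNReal.coe_pos.2 hs).trans hsE)
  have : CompleteSpace E := FiniteDimensional.complete ℝ E
  obtain ⟨A, hA, hballs⟩ := exists_separated_balls_le_infDist (E := E) (F := F) (κ := κ)
  obtain ⟨m₀, hstage⟩ :=
    exists_stage_radius_bounds (fun k => norm_pos_iff.2 (hM k)) hτ hbdd hcard hr
  obtain ⟨m, hR, hdim, hm⟩ := exists_nat_rpow_le_pow_and_add_rpow_le hA hsE hδ m₀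
  obtain ⟨stage, c, hc, hfiber, hscale⟩ := hstage (A * m) hR
  have hR₀ : 0 < A * m := one_pos.trans hR
  have hm₀ : 0 < m := by exact_mod_cast pos_of_mul_pos_right hR₀ hA.le
  have hactive : ∀ j, {k | stage k = j}.encard ≤ m := fun j => by
    have hle := (hfiber j).trans (ENNReal.ofReal_le_ofReal hm)
    rw [ENNReal.ofReal_natCast] at hle
    exact_mod_cast hle
  let S : ℕ → Set E := fun j => {x | ∀ k, stage k = j → c * τ k ≤ infDist (M k x) (Z k)}
  have hS : ⋂ j, S j = {x | ∀ k, c * τ k ≤ infDist (M k x) (Z k)} := by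
    ext x
    simp only [S, mem_iInter, mem_ofPred_eq, forall_eq', forall_comm (α := ℕ)]
  refine ⟨c, hc, hS ▸ le_dimH_of_separated_subdivision hR hr hs (P := m ^ finrank ℝ E)
    (by exact_mod_cast hdim) x₀ fun j x => ?_⟩
  have hradius : A * m * (r / (A * m) ^ (j + 1)) = r / (A * m) ^ j := by
    rw [pow_succ', ← div_div, mul_div_left_comm]
    field_simp
  rw [← hradius]
  exact hballs hm₀ (hactive j) (by positivity) (fun k _ => hM k) (fun k _ => hZne k)
    (fun k _ => hZsep k) (fun k hk => hradius ▸ hk ▸ (hscale k).2) (fun k hk => hk ▸ (hscale k).1) x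

theorem stmt16_general {M : κ → E →L[ℝ] F} (hM : ∀ k, M k ≠ 0)
    {τ : κ → ℝ} (hτ : ∀ k, 0 < τ k) {Z : κ → Set F} (hZne : ∀ k, (Z k).Nonempty)
    (hZsep : ∀ k, (Z k).Pairwise fun z z' => τ k ≤ dist z z')
    (hbdd : BddBelow (range fun k => Real.log (‖M k‖ / τ k))) {δ : ℝ} (hδ : δ < 1)
    (hcard : ∀ t b : ℝ, 0 < b →
      {k | t - b < Real.log (‖M k‖ / τ k) ∧ Real.log (‖M k‖ / τ k) ≤ t}.encard ≤
        ENNReal.ofReal (Real.exp (δ * b)))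
    {U : Set E} (hU : IsOpen U) (hUne : U.Nonempty) :
    dimH ({x | ∃ c : ℝ, 0 < c ∧ ∀ k, c * τ k ≤ infDist (M k x) (Z k)} ∩ U) = finrank ℝ E := by
  refine le_antisymm ((dimH_mono (subset_univ _)).trans (Real.dimH_univ_eq_finrank E).le)
    (ENNReal.le_of_forall_nnreal_lt fun s hs => ?_)
  rcases eq_or_ne s 0 with rfl | hs₀
  · simp only [ENNReal.coe_zero, zero_le]
  obtain ⟨x₀, hx₀⟩ := hUne
  obtain ⟨r, hr, hrU⟩ := nhds_basis_closedBall.mem_iff.1 (hU.mem_nhds hx₀)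
  obtain ⟨c, hc, hdim⟩ := exists_pos_le_dimH_inter_closedBall hM hτ hZne hZsep hbdd hδ hcard
    (pos_iff_ne_zero.2 hs₀) (by exact_mod_cast hs) x₀ hr
  exact hdim.trans (dimH_mono (inter_subset_inter (fun x hx => ⟨c, hc, hx⟩) hrU))

end Thickness

/-- Let `(M_k)` be a sequence of invertible matrices with
operator norms `t_k`, `(Z_k)` nonempty `τ_k`-separated sets, such that the set
`{log(t_k/τ_k)}` is discrete and bounded below and, for some `δ̄ < 1`, each
window `(t−b, t]` contains at most `e^{δ̄ b}` of the values `log(t_k/τ_k)`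
(counted with multiplicity in `k`).  Then the set
`E = {x : ∃ c > 0, dist(M_k x, Z_k) ≥ c τ_k ∀k}` is thick: its intersection
with every nonempty open set has Hausdorff dimension `n`. -/
theorem stmt16 (n : ℕ) (hn : 1 ≤ n)
    (M : ℕ → (EuclideanSpace ℝ (Fin n) →L[ℝ] EuclideanSpace ℝ (Fin n)))
    (hM : ∀ k, Function.Bijective (M k))
    (τ : ℕ → ℝ) (hτ : ∀ k, 0 < τ k)
    (Z : ℕ → Set (EuclideanSpace ℝ (Fin n)))
    (hZne : ∀ k, (Z k).Nonempty)
    (hZsep : ∀ k, ∀ z₁ ∈ Z k, ∀ z₂ ∈ Z k, z₁ ≠ z₂ → τ k ≤ dist z₁ z₂)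
    -- {log(t_k/τ_k)} is discrete and bounded below
    (hdisc : ∀ t : ℝ, {x : ℝ | (∃ k, Real.log (‖M k‖ / τ k) = x) ∧ x ≤ t}.Finite)
    (δbar : ℝ) (hδbar : δbar < 1)
    -- counting condition with multiplicity
    (hcard : ∀ t b : ℝ, 0 < b →
      {k : ℕ | t - b < Real.log (‖M k‖ / τ k) ∧ Real.log (‖M k‖ / τ k) ≤ t}.encard ≤
        ENNReal.ofReal (Real.exp (δbar * b))) :
    ∀ U : Set (EuclideanSpace ℝ (Fin n)), IsOpen U → U.Nonempty →
      dimH ({x : EuclideanSpace ℝ (Fin n) | ∃ c : ℝ, 0 < c ∧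
          ∀ k : ℕ, c * τ k ≤ infDist (M k x) (Z k)} ∩ U) = (n : ENNReal) := by
  intro U hU hUne
  have : Nonempty (Fin n) := ⟨⟨0, hn⟩⟩
  have hM₀ : ∀ k, M k ≠ 0 := fun k h =>
    LinearMap.ne_zero_of_injective (hM k).1 (congrArg ContinuousLinearMap.toLinearMap h)
  simpa only [finrank_euclideanSpace_fin] using stmt16_general hM₀ hτ hZne
    (fun k _ hz _ hz' => hZsep k _ hz _ hz') (bddBelow_of_finite_inter_Iic (hdisc 0)) hδbar hcard
    hU hUne
end
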